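/- Let Φ : ℕ → (1,∞) be a function with Φ(n) → ∞ as n → ∞, and suppose 1 < B < ∞ where log B = liminf_{n→∞} (log Φ(n))/n. Then the Hausdorff dimension of F(Φ) equals t_B, where t_B = inf{ s ≥ 0 : lim_{n→∞} (1/n)·log( Σ_{(a_1,…,a_n)∈ℕ^n} B^{−n s²} · q_n(a_1,…,a_n)^{−2s} ) ≤ 0 }. -/

import Mathlib

/-!
The dimension of `F(Φ)` is computed by matching upper and lower bounds, for `s` close to the critical
exponent `t_B`. It is at most `1` (`presInf_le_one`), since `Σ q_n ^ (-2) ≤ 2`, and below `t_B` the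
partition sums `Σ q_n ^ (-2s)` exceed, for some `C > B` and every `K`, the value `K C ^ (n s²)` for
at least one `n`, while above it they are eventually smaller than `(A ^ (s²) ρ) ^ n` with `A < B` and `ρ < 1` (`partSum_lower`,
`partSum_upper`; the growth rate exists by submultiplicativity of the partition sums).

Upper bound (`dimH_Fset_le`). Eventually `Φ n ≥ A ^ n`. A point with `a_n a_{n+1} ≥ A ^ n` has either
`a_n ≥ A ^ (s n)`, or `a_n = i < A ^ (s n)` and `a_{n+1} ≥ A ^ n / i`. The corresponding pieces of
cylinders have total `s`-cost of order `A ^ (-n s²) Σ q_{n-1} ^ (-2s)`: the exponent `s` of the cut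
balances the two cases. The cost is summable in `n`, so the limsup set is null for the
`s`-dimensional Hausdorff measure (`hausdorffMeasure_limsup_eq_zero`).

Lower bound (`le_dimH_Fset`). Fix `s < t_B`. Random continued fractions are formed from independent
blocks of equal length `m + 3`. A regular block is drawn from a finite set of words `w` with
probability proportional to `q(w) ^ (-2s)`; the partition sum being larger than
`4608 C ^ (s² (m + 3))`, the ratio of the mass of a prefix to `q ^ (-2s)` decreases by the factor
`C ^ (-s² (m + 3)) / 2` at each regular step (`reg_step`), hence is at most `C ^ (-s² n)` when a
special step at place `n` is reached, provided special steps are sparse (`le_one_of_sparse`). At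
such a place, chosen so that `Φ n ≤ C ^ n`, the two letters `a_n ≈ C ^ (s n)` and
`a_{n+1} ≈ C ^ ((1 - s) n)` are drawn uniformly. Both scales met inside a special block are
controlled by exactly the factor `C ^ (-s² n)` (`spBlock_local`), so the law of the random point
assigns to a set of diameter `r` a mass of order at most `r ^ s`, and the mass distribution
principle applies (`le_dimH_of_blocks`). The letters are smaller than `Φ` because
`C ^ max s (1 - s) < A < B`, so the coded points lie in `F(Φ)` (`codePt_mem_Fset`).
-/

open Filter Topology MeasureTheory
open scoped ENNReal NNReal

/-- The Gauss map `T(x) = 1/x - ⌊1/x⌋` (with `T 0 = 0`). -/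
noncomputable def gaussMap (x : ℝ) : ℝ := if x = 0 then 0 else 1 / x - ⌊1 / x⌋

/-- The `n`-th partial quotient `a_n(x) = ⌊1 / T^[n-1] x⌋` of the continued fraction
expansion of `x` (for `n ≥ 1`). -/
noncomputable def cfA (n : ℕ) (x : ℝ) : ℕ := ⌊1 / gaussMap^[n - 1] x⌋₊

/-- The continuant `q_n(a_1, …, a_n)`, defined by `q_{-1} = 0`, `q_0 = 1`,
`q_k = a_k q_{k-1} + q_{k-2}`. -/
def contQ (l : List ℕ) : ℕ := (l.foldl (fun p a => (p.2, a * p.2 + p.1)) (0, 1)).2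

/-- The continuant numerator `p_n(a_1, …, a_n)`, defined by `p_{-1} = 1`, `p_0 = 0`,
`p_k = a_k p_{k-1} + p_{k-2}`. -/
def contP (l : List ℕ) : ℕ := (l.foldl (fun p a => (p.2, a * p.2 + p.1)) (1, 0)).2

/-- `q_n(x) = q_n(a_1(x), …, a_n(x))`. -/
noncomputable def cfQ (x : ℝ) (n : ℕ) : ℕ := contQ (List.ofFn fun i : Fin n => cfA (i + 1) x)

/-- `p_n(x) = p_n(a_1(x), …, a_n(x))`. -/
noncomputable def cfP (x : ℝ) (n : ℕ) : ℕ := contP (List.ofFn fun i : Fin n => cfA (i + 1) x)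

/-- The sum `Σ_{(a_1,…,a_n) ∈ ℕ^n} B^{-n c} · q_n(a_1,…,a_n)^{-2 s}` over all `n`-tuples
of positive integers, computed in `ℝ≥0∞`. -/
noncomputable def presSum (B c s : ℝ) (n : ℕ) : ℝ≥0∞ :=
  ∑' a : Fin n → ℕ+,
    ENNReal.ofReal (B ^ (-(n : ℝ) * c) *
      (contQ (List.ofFn fun i => (a i : ℕ)) : ℝ) ^ (-2 * s))

/-- `inf { s ≥ 0 : lim_{n→∞} (1/n) · log( Σ_{(a_1,…,a_n)∈ℕ^n} B^{-n·c(s)} q_n^{-2s} ) ≤ 0 }`,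
where the limit is required to exist (in `EReal`) and be `≤ 0`. -/
noncomputable def presInf (B : ℝ) (c : ℝ → ℝ) : ℝ :=
  sInf {s : ℝ | 0 ≤ s ∧ ∃ P : EReal, P ≤ 0 ∧
    Tendsto (fun n : ℕ => (((n : ℝ)⁻¹ : ℝ) : EReal) * ENNReal.log (presSum B (c s) s n))
      atTop (nhds P)}

/-- The set `F(Φ)` of irrational `x ∈ [0,1)` with `a_{n+1}(x) a_n(x) ≥ Φ(n)` for infinitely
many `n` and `a_{n+1}(x) < Φ(n)` for all sufficiently large `n`. -/
def Fset (Φ : ℕ → ℝ) : Set ℝ :=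
  {x | x ∈ Set.Ico (0 : ℝ) 1 ∧ Irrational x ∧
    (∃ᶠ n in atTop, Φ n ≤ (cfA (n + 1) x : ℝ) * (cfA n x : ℝ)) ∧
    (∀ᶠ n in atTop, (cfA (n + 1) x : ℝ) < Φ n)}

/-! ### Continuants and inverse branches of the Gauss map -/

/-- The inverse branch `t ↦ [a_1, …, a_n + t]` of the `n`-th iterate of the Gauss map
attached to the word `a_1 … a_n`. -/
noncomputable def cfPhi : List ℕ → ℝ → ℝ
  | [], t => t
  | a :: w, t => 1 / ((a : ℝ) + cfPhi w t)

/-- The previous continuant `q_{n-1}` of a word of length `n` (with `q_{-1} = 0`). -/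
def prevQ (l : List ℕ) : ℕ := (l.foldl (fun p a => (p.2, a * p.2 + p.1)) (0, 1)).1

/-- The previous numerator `p_{n-1}` of a word of length `n` (with `p_{-1} = 1`). -/
def prevP (l : List ℕ) : ℕ := (l.foldl (fun p a => (p.2, a * p.2 + p.1)) (1, 0)).1

/-- All letters of the word are positive, so that the word is a block of partial quotients. -/
def PosWord (l : List ℕ) : Prop := ∀ a ∈ l, 1 ≤ a

lemma PosWord.append {u v : List ℕ} (hu : PosWord u) (hv : PosWord v) : PosWord (u ++ v) := by
  intro a ha
  rcases List.mem_append.1 ha with h | h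
  exacts [hu a h, hv a h]

lemma PosWord.left {u v : List ℕ} (h : PosWord (u ++ v)) : PosWord u :=
  fun a ha => h a (List.mem_append_left _ ha)

lemma PosWord.right {u v : List ℕ} (h : PosWord (u ++ v)) : PosWord v :=
  fun a ha => h a (List.mem_append_right _ ha)

lemma posWord_nil : PosWord [] := by intro a ha; simp at ha

lemma posWord_cons {a : ℕ} {w : List ℕ} : PosWord (a :: w) ↔ 1 ≤ a ∧ PosWord w := by
  simp [PosWord]

lemma cfPhi_append (u v : List ℕ) (t : ℝ) : cfPhi (u ++ v) t = cfPhi u (cfPhi v t) := by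
  induction u with
  | nil => rfl
  | cons a u ih => simp [cfPhi, ih]

lemma contQ_concat (l : List ℕ) (a : ℕ) : contQ (l ++ [a]) = a * contQ l + prevQ l := by
  simp [contQ, prevQ]

lemma prevQ_concat (l : List ℕ) (a : ℕ) : prevQ (l ++ [a]) = contQ l := by
  simp [contQ, prevQ]

lemma contP_concat (l : List ℕ) (a : ℕ) : contP (l ++ [a]) = a * contP l + prevP l := by
  simp [contP, prevP]

lemma prevP_concat (l : List ℕ) (a : ℕ) : prevP (l ++ [a]) = contP l := by
  simp [contP, prevP]

@[simp] lemma contQ_nil : contQ [] = 1 := rfl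
@[simp] lemma prevQ_nil : prevQ [] = 0 := rfl
@[simp] lemma contP_nil : contP [] = 0 := rfl
@[simp] lemma prevP_nil : prevP [] = 1 := rfl

lemma contQ_bounds {l : List ℕ} (h : PosWord l) : 1 ≤ contQ l ∧ prevQ l ≤ contQ l := by
  induction l using List.reverseRecOn with
  | nil => simp
  | append_singleton l a ih =>
    obtain ⟨h1, h2⟩ := ih h.left
    have ha : 1 ≤ a := h a (by simp)
    rw [contQ_concat, prevQ_concat]
    constructor <;> nlinarith

lemma contQ_pos {l : List ℕ} (h : PosWord l) : (0 : ℝ) < contQ l := by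
  exact_mod_cast (contQ_bounds h).1

lemma one_le_contQ {l : List ℕ} (h : PosWord l) : (1 : ℝ) ≤ contQ l := by
  exact_mod_cast (contQ_bounds h).1

lemma prevQ_le {l : List ℕ} (h : PosWord l) : (prevQ l : ℝ) ≤ contQ l := by
  exact_mod_cast (contQ_bounds h).2

lemma contP_le {l : List ℕ} (h : PosWord l) :
    contP l ≤ contQ l ∧ (l ≠ [] → prevP l ≤ prevQ l) := by
  induction l using List.reverseRecOn with
  | nil => simp
  | append_singleton l a ih =>
    obtain ⟨h1, h2⟩ := ih h.left
    have ha : 1 ≤ a := h a (by simp)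
    rw [contQ_concat, prevQ_concat, contP_concat, prevP_concat]
    refine ⟨?_, fun _ => h1⟩
    by_cases hl : l = []
    · subst hl; simpa using ha
    · nlinarith [h2 hl]

/-- Splitting of the continuant of a concatenation. -/
lemma contQ_append (u v : List ℕ) :
    contQ (u ++ v) = contQ u * contQ v + prevQ u * contP v ∧
    prevQ (u ++ v) = contQ u * prevQ v + prevQ u * prevP v := by
  induction v using List.reverseRecOn with
  | nil => simp
  | append_singleton v a ih =>
    rw [← List.append_assoc, contQ_concat, prevQ_concat, contQ_concat, contP_concat,
      prevQ_concat, prevP_concat, ih.1, ih.2]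
    constructor <;> ring

lemma contQ_append_ge (u v : List ℕ) : contQ u * contQ v ≤ contQ (u ++ v) := by
  rw [(contQ_append u v).1]; exact Nat.le_add_right _ _

lemma contQ_append_le {u v : List ℕ} (hu : PosWord u) (hv : PosWord v) :
    contQ (u ++ v) ≤ 2 * (contQ u * contQ v) := by
  rw [(contQ_append u v).1]
  have := Nat.mul_le_mul (contQ_bounds hu).2 (contP_le hv).1
  omega

lemma cfPhi_nonneg (l : List ℕ) {t : ℝ} (ht : 0 ≤ t) : 0 ≤ cfPhi l t := by
  induction l with
  | nil => exact ht
  | cons a w ih => simp only [cfPhi]; positivity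

lemma cfPhi_le_one {l : List ℕ} (h : PosWord l) {t : ℝ} (ht : 0 ≤ t) (ht1 : t ≤ 1) :
    cfPhi l t ≤ 1 := by
  cases l with
  | nil => exact ht1
  | cons a w =>
    have ha : (1 : ℝ) ≤ a := by exact_mod_cast (posWord_cons.1 h).1
    have := cfPhi_nonneg w ht
    simp only [cfPhi]
    rw [div_le_one (by linarith)]; linarith

lemma cfPhi_eq {l : List ℕ} (h : PosWord l) {t : ℝ} (ht : 0 ≤ t) :
    cfPhi l t = (contP l + t * prevP l) / (contQ l + t * prevQ l) := by
  induction l using List.reverseRecOn generalizing t with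
  | nil => simp [cfPhi]
  | append_singleton l a ih =>
    have ha : (1 : ℝ) ≤ a := by exact_mod_cast h a (by simp)
    have hq := contQ_pos h.left
    have hat : 0 < (a : ℝ) + t := by linarith
    rw [cfPhi_append, ih h.left (t := cfPhi [a] t) (cfPhi_nonneg _ ht), contQ_concat,
      contP_concat, prevQ_concat, prevP_concat]
    simp only [cfPhi]
    push_cast
    have hp : (0 : ℝ) ≤ prevQ l := Nat.cast_nonneg _
    have h1 : 0 < (contQ l : ℝ) + 1 / (a + t) * prevQ l := by positivity
    have h2 : 0 < (a * contQ l + prevQ l + t * contQ l : ℝ) := by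
      have : (a * contQ l + prevQ l + t * contQ l : ℝ) = (a + t) * contQ l + prevQ l := by ring
      rw [this]; positivity
    rw [div_eq_div_iff h1.ne' h2.ne']
    field_simp
    ring

lemma cont_det (l : List ℕ) :
    ((contP l : ℝ) * prevQ l - prevP l * contQ l) ^ 2 = 1 := by
  induction l using List.reverseRecOn with
  | nil => simp
  | append_singleton l a ih =>
    rw [contQ_concat, contP_concat, prevQ_concat, prevP_concat, ← ih]
    push_cast
    ring

lemma cfPhi_dist {l : List ℕ} (h : PosWord l) {t t' : ℝ} (ht : 0 ≤ t) (ht' : 0 ≤ t') :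
    |cfPhi l t - cfPhi l t'| =
      |t - t'| / ((contQ l + t * prevQ l) * (contQ l + t' * prevQ l)) := by
  have hq := contQ_pos h
  have hp : (0 : ℝ) ≤ prevQ l := Nat.cast_nonneg _
  have h1 : 0 < (contQ l : ℝ) + t * prevQ l := by positivity
  have h2 : 0 < (contQ l : ℝ) + t' * prevQ l := by positivity
  have hd : |(contP l : ℝ) * prevQ l - prevP l * contQ l| = 1 := by
    rw [← sq_eq_sq₀ (abs_nonneg _) zero_le_one, sq_abs, cont_det, one_pow]
  rw [cfPhi_eq h ht, cfPhi_eq h ht', div_sub_div _ _ h1.ne' h2.ne', abs_div,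
    abs_of_pos (mul_pos h1 h2)]
  congr 1
  have : ((contP l : ℝ) + t * prevP l) * (contQ l + t' * prevQ l) -
      (contQ l + t * prevQ l) * (contP l + t' * prevP l) =
      (t' - t) * ((contP l : ℝ) * prevQ l - prevP l * contQ l) := by ring
  rw [this, abs_mul, hd, mul_one, abs_sub_comm]

lemma cfPhi_dist_le {l : List ℕ} (h : PosWord l) {t t' : ℝ} (ht : 0 ≤ t) (ht' : 0 ≤ t') :
    |cfPhi l t - cfPhi l t'| ≤ |t - t'| / (contQ l : ℝ) ^ 2 := by
  have hq := contQ_pos h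
  have hp : (0 : ℝ) ≤ prevQ l := Nat.cast_nonneg _
  rw [cfPhi_dist h ht ht', sq]
  have h1 : (contQ l : ℝ) ≤ contQ l + t * prevQ l := by nlinarith
  have h2 : (contQ l : ℝ) ≤ contQ l + t' * prevQ l := by nlinarith
  gcongr

lemma cfPhi_dist_ge {l : List ℕ} (h : PosWord l) {t t' : ℝ} (ht : 0 ≤ t) (ht' : 0 ≤ t')
    (ht1 : t ≤ 1) (ht1' : t' ≤ 1) :
    |t - t'| / (4 * (contQ l : ℝ) ^ 2) ≤ |cfPhi l t - cfPhi l t'| := by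
  have hq := contQ_pos h
  have hp : (0 : ℝ) ≤ prevQ l := Nat.cast_nonneg _
  have hpq := prevQ_le h
  rw [cfPhi_dist h ht ht']
  have h1 : (contQ l : ℝ) + t * prevQ l ≤ 2 * contQ l := by nlinarith
  have h2 : (contQ l : ℝ) + t' * prevQ l ≤ 2 * contQ l := by nlinarith
  have h3 : (4 * (contQ l : ℝ) ^ 2) = (2 * contQ l) * (2 * contQ l) := by ring
  rw [h3]
  gcongr

/-! ### The Gauss map on a cylinder -/

lemma gaussMap_inv_add {a : ℕ} (ha : 1 ≤ a) {t : ℝ} (ht : 0 < t) (ht1 : t < 1) :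
    gaussMap (1 / ((a : ℝ) + t)) = t ∧ ⌊1 / (1 / ((a : ℝ) + t))⌋₊ = a := by
  have ha' : (1 : ℝ) ≤ a := by exact_mod_cast ha
  have h0 : 1 / ((a : ℝ) + t) ≠ 0 := by positivity
  constructor
  · rw [gaussMap, if_neg h0, one_div_one_div]
    have : ⌊(a : ℝ) + t⌋ = (a : ℤ) := by
      rw [Int.floor_eq_iff]; push_cast; constructor <;> linarith
    rw [this]; push_cast; ring
  · rw [one_div_one_div, Nat.floor_eq_iff (by linarith)]
    constructor <;> linarith

lemma cfPhi_pos_lt_one {l : List ℕ} (h : PosWord l) {t : ℝ} (ht : 0 < t) (ht1 : t < 1) :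
    0 < cfPhi l t ∧ cfPhi l t < 1 := by
  induction l with
  | nil => exact ⟨ht, ht1⟩
  | cons a w ih =>
    obtain ⟨h1, h2⟩ := ih (posWord_cons.1 h).2
    have ha : (1 : ℝ) ≤ a := by exact_mod_cast (posWord_cons.1 h).1
    simp only [cfPhi]
    refine ⟨by positivity, ?_⟩
    rw [div_lt_one (by linarith)]; linarith

lemma gaussMap_iterate_cfPhi {l : List ℕ} (h : PosWord l) {t : ℝ} (ht : 0 < t) (ht1 : t < 1) :
    gaussMap^[l.length] (cfPhi l t) = t := by
  induction l with
  | nil => rfl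
  | cons a w ih =>
    obtain ⟨ha, hw⟩ := posWord_cons.1 h
    obtain ⟨h1, h2⟩ := cfPhi_pos_lt_one hw ht ht1
    rw [List.length_cons, Function.iterate_succ_apply]
    simp only [cfPhi]
    rw [(gaussMap_inv_add ha h1 h2).1, ih hw]

/-- The letter following the prefix `u` is read off as a partial quotient. -/
lemma cfA_cfPhi {u v : List ℕ} {a : ℕ} (h : PosWord (u ++ a :: v)) {t : ℝ} (ht : 0 < t)
    (ht1 : t < 1) : cfA (u.length + 1) (cfPhi (u ++ a :: v) t) = a := by
  obtain ⟨ha, hw⟩ := posWord_cons.1 h.right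
  obtain ⟨h1, h2⟩ := cfPhi_pos_lt_one hw ht ht1
  obtain ⟨h3, h4⟩ := cfPhi_pos_lt_one h.right ht ht1
  rw [cfA, Nat.add_sub_cancel, cfPhi_append, gaussMap_iterate_cfPhi h.left h3 h4]
  simp only [cfPhi]
  exact (gaussMap_inv_add ha h1 h2).2

/-- The first `n` partial quotients of `x`. -/
noncomputable def cfWord (x : ℝ) (n : ℕ) : List ℕ := List.ofFn fun i : Fin n => cfA (i + 1) x

lemma gaussMap_irrational {x : ℝ} (hx : Irrational x) :
    Irrational (gaussMap x) ∧ 0 < gaussMap x ∧ gaussMap x < 1 := by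
  have h0 : x ≠ 0 := hx.ne_zero
  have hirr : Irrational (1 / x) := by rw [one_div]; exact irrational_inv_iff.2 hx
  have h1 : Irrational (gaussMap x) := by
    rw [gaussMap, if_neg h0]
    exact hirr.sub_intCast _
  refine ⟨h1, lt_of_le_of_ne ?_ h1.ne_zero.symm, ?_⟩
  · rw [gaussMap, if_neg h0]; exact sub_nonneg.2 (Int.floor_le _)
  · rw [gaussMap, if_neg h0]; linarith [Int.lt_floor_add_one (1 / x)]

lemma gaussMap_iterate_irrational {x : ℝ} (hx : Irrational x) (h0 : 0 < x) (h1 : x < 1) (n : ℕ) :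
    Irrational (gaussMap^[n] x) ∧ 0 < gaussMap^[n] x ∧ gaussMap^[n] x < 1 := by
  induction n with
  | zero => exact ⟨hx, h0, h1⟩
  | succ n ih => rw [Function.iterate_succ_apply']; exact gaussMap_irrational ih.1

lemma eq_inv_floor_add_gauss {x : ℝ} (h0 : 0 < x) (h1 : x < 1) :
    1 ≤ ⌊1 / x⌋₊ ∧ x = 1 / ((⌊1 / x⌋₊ : ℝ) + gaussMap x) := by
  have h2 : 1 ≤ 1 / x := by rw [le_div_iff₀ h0]; linarith
  refine ⟨Nat.le_floor (by simpa using h2), ?_⟩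
  have h3 : ((⌊1 / x⌋₊ : ℕ) : ℝ) = ((⌊1 / x⌋ : ℤ) : ℝ) := by
    exact_mod_cast Int.natCast_floor_eq_floor (a := 1 / x) (by linarith)
  rw [gaussMap, if_neg h0.ne', h3]
  field_simp
  ring

lemma cfWord_succ (x : ℝ) (n : ℕ) : cfWord x (n + 1) = cfWord x n ++ [cfA (n + 1) x] := by
  rw [cfWord, List.ofFn_succ', List.concat_eq_append]
  rfl

lemma cfA_pos {x : ℝ} (hx : Irrational x) (h0 : 0 < x) (h1 : x < 1) (n : ℕ) :
    1 ≤ cfA (n + 1) x := by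
  obtain ⟨_, h2, h3⟩ := gaussMap_iterate_irrational hx h0 h1 n
  exact (eq_inv_floor_add_gauss h2 h3).1

lemma cfWord_pos {x : ℝ} (hx : Irrational x) (h0 : 0 < x) (h1 : x < 1) (n : ℕ) :
    PosWord (cfWord x n) := by
  intro a ha
  rw [cfWord, List.mem_ofFn] at ha
  obtain ⟨i, rfl⟩ := ha
  exact cfA_pos hx h0 h1 i

lemma cfPhi_cfWord {x : ℝ} (hx : Irrational x) (h0 : 0 < x) (h1 : x < 1) (n : ℕ) :
    cfPhi (cfWord x n) (gaussMap^[n] x) = x := by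
  induction n with
  | zero => rfl
  | succ n ih =>
    obtain ⟨_, h2, h3⟩ := gaussMap_iterate_irrational hx h0 h1 n
    rw [cfWord_succ, cfPhi_append, Function.iterate_succ_apply']
    simp only [cfPhi, cfA, Nat.add_sub_cancel]
    rw [← (eq_inv_floor_add_gauss h2 h3).2, ih]

lemma gaussMap_iterate_le {x : ℝ} (hx : Irrational x) (h0 : 0 < x) (h1 : x < 1) (n : ℕ) :
    gaussMap^[n] x ≤ 1 / cfA (n + 1) x := by
  obtain ⟨_, h2, h3⟩ := gaussMap_iterate_irrational hx h0 h1 n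
  have h4 := (gaussMap_irrational (gaussMap_iterate_irrational hx h0 h1 n).1).2.1
  obtain ⟨h5, h6⟩ := eq_inv_floor_add_gauss h2 h3
  have h7 : (1 : ℝ) ≤ (cfA (n + 1) x : ℝ) := by exact_mod_cast cfA_pos hx h0 h1 n
  rw [h6]
  have : (⌊1 / gaussMap^[n] x⌋₊ : ℝ) = cfA (n + 1) x := by simp [cfA]
  rw [this]
  gcongr
  linarith

/-! ### The pressure sums -/

/-- The word of positive integers attached to a tuple. -/
def tupleWord {n : ℕ} (a : Fin n → ℕ+) : List ℕ := List.ofFn fun i => (a i : ℕ)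

lemma tupleWord_pos {n : ℕ} (a : Fin n → ℕ+) : PosWord (tupleWord a) := by
  intro b hb
  rw [tupleWord, List.mem_ofFn] at hb
  obtain ⟨i, rfl⟩ := hb
  exact (a i).pos

lemma tupleWord_length {n : ℕ} (a : Fin n → ℕ+) : (tupleWord a).length = n := by
  simp [tupleWord]

lemma tupleWord_append {n m : ℕ} (a : Fin n → ℕ+) (b : Fin m → ℕ+) :
    tupleWord (Fin.append a b) = tupleWord a ++ tupleWord b := by
  rw [tupleWord, tupleWord, tupleWord, ← List.ofFn_fin_append]
  congr 1
  ext i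
  refine Fin.addCases (fun j => ?_) (fun j => ?_) i <;> simp

lemma tupleWord_injective {n : ℕ} : Function.Injective (tupleWord (n := n)) := by
  intro a b h
  have := List.ofFn_injective h
  funext i
  exact PNat.eq (congrFun this i)

lemma exists_tupleWord {l : List ℕ} (h : PosWord l) :
    ∃ a : Fin l.length → ℕ+, tupleWord a = l := by
  refine ⟨fun i => ⟨l.get i, h _ (List.get_mem l i)⟩, ?_⟩
  simp [tupleWord]

/-- The partition sum `Σ q_n(a)^{-2s}` over all words of length `n`. -/
noncomputable def partSum (s : ℝ) (n : ℕ) : ℝ≥0∞ :=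
  ∑' a : Fin n → ℕ+, ENNReal.ofReal ((contQ (tupleWord a) : ℝ) ^ (-2 * s))

lemma presSum_eq {B : ℝ} (hB : 0 < B) (c s : ℝ) (n : ℕ) :
    presSum B c s n = ENNReal.ofReal (B ^ (-(n : ℝ) * c)) * partSum s n := by
  rw [presSum, partSum, ← ENNReal.tsum_mul_left]
  congr 1
  ext a
  rw [← ENNReal.ofReal_mul (by positivity)]
  rfl

lemma partSum_add_le {s : ℝ} (hs : 0 ≤ s) (n m : ℕ) :
    partSum s (n + m) ≤ partSum s n * partSum s m := by
  rw [partSum, ← (Fin.appendEquiv n m).tsum_eq, ENNReal.tsum_prod', partSum,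
    ← ENNReal.tsum_mul_right]
  refine ENNReal.tsum_le_tsum fun a => ?_
  rw [partSum, ← ENNReal.tsum_mul_left]
  refine ENNReal.tsum_le_tsum fun b => ?_
  rw [← ENNReal.ofReal_mul (by positivity)]
  apply ENNReal.ofReal_le_ofReal
  have ha := contQ_pos (tupleWord_pos a)
  have hb := contQ_pos (tupleWord_pos b)
  have hab : tupleWord ((Fin.appendEquiv n m) (a, b)) = tupleWord a ++ tupleWord b :=
    tupleWord_append a b
  rw [hab, ← Real.mul_rpow ha.le hb.le]
  apply Real.rpow_le_rpow_of_nonpos (by positivity) _ (by linarith)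
  exact_mod_cast contQ_append_ge _ _

lemma contQ_ones_le (n : ℕ) : contQ (List.replicate n 1) ≤ 2 ^ n := by
  induction n with
  | zero => simp
  | succ n ih =>
    have h := (contQ_bounds (l := List.replicate n 1) (by intro a ha; simp at ha; omega)).2
    rw [List.replicate_succ', contQ_concat, pow_succ]
    omega

lemma partSum_ge {s : ℝ} (hs : 0 ≤ s) (n : ℕ) :
    ENNReal.ofReal (((2 : ℝ) ^ (-2 * s)) ^ n) ≤ partSum s n := by
  refine le_trans ?_ (ENNReal.le_tsum (fun _ => 1))
  apply ENNReal.ofReal_le_ofReal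
  have h1 : tupleWord (fun _ : Fin n => (1 : ℕ+)) = List.replicate n 1 := by
    simp [tupleWord]
  have h2 := contQ_pos (tupleWord_pos (fun _ : Fin n => (1 : ℕ+)))
  rw [← Real.rpow_natCast, ← Real.rpow_mul (by norm_num), mul_comm, Real.rpow_mul (by norm_num)]
  apply Real.rpow_le_rpow_of_nonpos h2 _ (by linarith)
  rw [h1, Real.rpow_natCast]
  exact_mod_cast contQ_ones_le n

lemma partSum_ne_zero {s : ℝ} (hs : 0 ≤ s) (n : ℕ) : partSum s n ≠ 0 := by
  have h := partSum_ge hs n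
  intro h0
  rw [h0, nonpos_iff_eq_zero, ENNReal.ofReal_eq_zero] at h
  have : (0 : ℝ) < ((2 : ℝ) ^ (-2 * s)) ^ n := by positivity
  linarith

lemma partSum_anti {s s' : ℝ} (h : s ≤ s') (n : ℕ) : partSum s' n ≤ partSum s n := by
  refine ENNReal.tsum_le_tsum fun a => ENNReal.ofReal_le_ofReal ?_
  exact Real.rpow_le_rpow_of_exponent_le (one_le_contQ (tupleWord_pos a)) (by linarith)

/-- Telescoping identity behind `Σ_a |I_{n+1}(u a)| ≤ |I_n(u)|` for cylinder lengths. -/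
lemma tsum_cylinder_le {q q' : ℝ} (hq : 0 < q) (hq' : 0 ≤ q') :
    ∑' a : ℕ+, ENNReal.ofReal (1 / (((a : ℕ) * q + q') * ((a : ℕ) * q + q' + q))) ≤
      ENNReal.ofReal (1 / (q * (q + q'))) := by
  rw [← Equiv.pnatEquivNat.symm.tsum_eq]
  refine ENNReal.tsum_le_of_sum_range_le fun k => ?_
  rw [← ENNReal.ofReal_sum_of_nonneg (fun i _ => by positivity)]
  apply ENNReal.ofReal_le_ofReal
  have key : ∀ k : ℕ, ∑ i ∈ Finset.range k,
      1 / ((((i : ℝ) + 1) * q + q') * (((i : ℝ) + 1) * q + q' + q)) =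
      1 / (q * (q + q')) - 1 / (q * (((k : ℝ) + 1) * q + q')) := by
    intro k
    induction k with
    | zero => simp
    | succ k ih =>
      rw [Finset.sum_range_succ, ih]
      push_cast
      have h1 : ((k : ℝ) + 1) * q + q' ≠ 0 := by positivity
      have h2 : ((k : ℝ) + 1 + 1) * q + q' ≠ 0 := by positivity
      have h3 : ((k : ℝ) + 1) * q + q' + q ≠ 0 := by positivity
      have h4 : ((k : ℝ) + 1) * q + q' + q = ((k : ℝ) + 1 + 1) * q + q' := by ring
      rw [h4, sub_add, sub_right_inj]
      field_simp
      ring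
  have h5 := key k
  have h6 : (0 : ℝ) ≤ 1 / (q * (((k : ℝ) + 1) * q + q')) := by positivity
  simp only [Equiv.pnatEquivNat_symm_apply, Nat.succPNat_coe, Nat.succ_eq_add_one, Nat.cast_add,
    Nat.cast_one]
  linarith

lemma tupleWord_snoc {n : ℕ} (a : Fin n → ℕ+) (b : ℕ+) :
    tupleWord (Fin.snoc (α := fun _ => ℕ+) a b) = tupleWord a ++ [(b : ℕ)] := by
  rw [tupleWord, List.ofFn_succ', List.concat_eq_append]
  simp [tupleWord]

lemma tsum_cyl_le_one (n : ℕ) : ∑' a : Fin n → ℕ+, ENNReal.ofReal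
    (1 / ((contQ (tupleWord a) : ℝ) * (contQ (tupleWord a) + prevQ (tupleWord a)))) ≤ 1 := by
  induction n with
  | zero => simp [tupleWord]
  | succ n ih =>
    refine le_trans ?_ ih
    rw [← (Fin.snocEquiv (fun _ : Fin (n + 1) => ℕ+)).tsum_eq, ENNReal.tsum_prod',
      ENNReal.tsum_comm]
    refine ENNReal.tsum_le_tsum fun a => ?_
    refine le_trans (le_of_eq ?_) (tsum_cylinder_le (contQ_pos (tupleWord_pos a))
      (Nat.cast_nonneg (prevQ (tupleWord a))))
    congr 1
    ext b
    have : tupleWord ((Fin.snocEquiv (fun _ : Fin (n + 1) => ℕ+)) (b, a)) =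
        tupleWord a ++ [(b : ℕ)] := tupleWord_snoc a b
    rw [this, contQ_concat, prevQ_concat]
    push_cast
    rfl

lemma partSum_one_le (n : ℕ) : partSum 1 n ≤ 2 := by
  have h : partSum 1 n ≤ 2 * ∑' a : Fin n → ℕ+, ENNReal.ofReal
      (1 / ((contQ (tupleWord a) : ℝ) * (contQ (tupleWord a) + prevQ (tupleWord a)))) := by
    rw [partSum, ← ENNReal.tsum_mul_left]
    refine ENNReal.tsum_le_tsum fun a => ?_
    have h2 : (2 : ℝ≥0∞) = ENNReal.ofReal 2 := by simp
    rw [h2, ← ENNReal.ofReal_mul (by norm_num)]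
    apply ENNReal.ofReal_le_ofReal
    have hq := contQ_pos (tupleWord_pos a)
    have hp := prevQ_le (tupleWord_pos a)
    have hp0 : (0 : ℝ) ≤ prevQ (tupleWord a) := Nat.cast_nonneg _
    have h3 : (-2 * 1 : ℝ) = -(2 : ℕ) := by norm_num
    rw [h3, Real.rpow_neg hq.le, Real.rpow_natCast, ← one_div, mul_one_div,
      div_le_div_iff₀ (by positivity) (by positivity)]
    nlinarith
  refine h.trans ?_
  calc _ ≤ (2 : ℝ≥0∞) * 1 := by gcongr; exact tsum_cyl_le_one n
    _ = 2 := by simp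

/-- The logarithmic growth rate of the pressure sums exists (Fekete), unless some sum diverges. -/
lemma presSum_limit {B c s : ℝ} (hB : 0 < B) (hs : 0 ≤ s) (hfin : ∀ n, partSum s n ≠ ⊤) :
    ∃ P : ℝ, Tendsto (fun n : ℕ => Real.log (presSum B c s n).toReal / n) atTop (𝓝 P) ∧
      Tendsto (fun n : ℕ => (((n : ℝ)⁻¹ : ℝ) : EReal) * ENNReal.log (presSum B c s n))
        atTop (𝓝 (P : EReal)) := by
  have hne0 : ∀ n, presSum B c s n ≠ 0 := fun n => by
    rw [presSum_eq hB]
    refine mul_ne_zero ?_ (partSum_ne_zero hs n)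
    rw [Ne, ENNReal.ofReal_eq_zero, not_le]; positivity
  have hnet : ∀ n, presSum B c s n ≠ ⊤ := fun n => by
    rw [presSum_eq hB]
    exact ENNReal.mul_ne_top ENNReal.ofReal_ne_top (hfin n)
  have hpos : ∀ n, 0 < (presSum B c s n).toReal := fun n =>
    ENNReal.toReal_pos (hne0 n) (hnet n)
  have hsub : Subadditive fun n => Real.log (presSum B c s n).toReal := by
    intro n m
    rw [← Real.log_mul (hpos n).ne' (hpos m).ne', ← ENNReal.toReal_mul]
    apply Real.log_le_log (hpos _)
    apply ENNReal.toReal_mono (ENNReal.mul_ne_top (hnet n) (hnet m))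
    rw [presSum_eq hB, presSum_eq hB, presSum_eq hB]
    calc _ ≤ ENNReal.ofReal (B ^ (-((n + m : ℕ) : ℝ) * c)) * (partSum s n * partSum s m) := by
          gcongr; exact partSum_add_le hs n m
      _ = _ := by
          have : -((n + m : ℕ) : ℝ) * c = -(n : ℝ) * c + -(m : ℝ) * c := by push_cast; ring
          rw [this, Real.rpow_add hB, ENNReal.ofReal_mul (by positivity)]
          ring
  have hbdd : BddBelow (Set.range fun n : ℕ => Real.log (presSum B c s n).toReal / n) := by
    refine ⟨min 0 (-c * Real.log B + Real.log ((2 : ℝ) ^ (-2 * s))), ?_⟩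
    rintro _ ⟨n, rfl⟩
    rcases Nat.eq_zero_or_pos n with rfl | hn
    · simp
    refine (min_le_right _ _).trans ?_
    have hn' : (0 : ℝ) < n := by exact_mod_cast hn
    simp only
    rw [le_div_iff₀ hn']
    have h1 : B ^ (-(n : ℝ) * c) * ((2 : ℝ) ^ (-2 * s)) ^ n ≤ (presSum B c s n).toReal := by
      rw [← ENNReal.ofReal_le_iff_le_toReal (hnet n), ENNReal.ofReal_mul (by positivity),
        presSum_eq hB]
      gcongr
      exact partSum_ge hs n
    have h2 := Real.log_le_log (by positivity) h1
    rw [Real.log_mul (by positivity) (by positivity), Real.log_rpow hB, Real.log_pow] at h2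
    linarith
  refine ⟨hsub.lim, hsub.tendsto_lim hbdd, ?_⟩
  have h1 := (continuous_coe_real_ereal.tendsto _).comp (hsub.tendsto_lim hbdd)
  refine h1.congr fun n => ?_
  rw [Function.comp, ENNReal.log_pos_real (hne0 n) (hnet n), ← EReal.coe_mul, div_eq_inv_mul]

/-- The set of exponents whose infimum is `presInf`. -/
def presSet (B : ℝ) : Set ℝ := {s : ℝ | 0 ≤ s ∧ ∃ P : EReal, P ≤ 0 ∧
    Tendsto (fun n : ℕ => (((n : ℝ)⁻¹ : ℝ) : EReal) * ENNReal.log (presSum B (s ^ 2) s n))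
      atTop (nhds P)}

lemma presInf_eq (B : ℝ) : presInf B (fun s => s ^ 2) = sInf (presSet B) := rfl

lemma presSet_bddBelow (B : ℝ) : BddBelow (presSet B) := ⟨0, fun _ h => h.1⟩

lemma one_mem_presSet {B : ℝ} (hB : 1 < B) : (1 : ℝ) ∈ presSet B := by
  have hB0 : 0 < B := by linarith
  have hfin : ∀ n, partSum 1 n ≠ ⊤ := fun n =>
    ne_top_of_le_ne_top (by simp) (partSum_one_le n)
  obtain ⟨P, hP1, hP2⟩ := presSum_limit (c := (1 : ℝ) ^ 2) hB0 zero_le_one hfin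
  refine ⟨zero_le_one, P, ?_, hP2⟩
  have h2 : Tendsto (fun n : ℕ => Real.log 2 / n) atTop (𝓝 0) :=
    tendsto_const_div_atTop_nhds_zero_nat _
  have h3 : P ≤ 0 := by
    refine le_of_tendsto_of_tendsto' hP1 h2 fun n => ?_
    gcongr
    · refine ENNReal.toReal_pos ?_ ?_ <;> rw [presSum_eq hB0]
      · refine mul_ne_zero ?_ (partSum_ne_zero zero_le_one n)
        rw [Ne, ENNReal.ofReal_eq_zero, not_le]; positivity
      · exact ENNReal.mul_ne_top ENNReal.ofReal_ne_top (hfin n)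
    · have : presSum B (1 ^ 2) 1 n ≤ 2 := by
        rw [presSum_eq hB0]
        calc _ ≤ (1 : ℝ≥0∞) * 2 := by
              gcongr
              · rw [ENNReal.ofReal_le_one]
                exact Real.rpow_le_one_of_one_le_of_nonpos hB.le (by simp)
              · exact partSum_one_le n
          _ = 2 := by simp
      simpa using ENNReal.toReal_mono (by simp) this
  exact_mod_cast h3

lemma presInf_le_one {B : ℝ} (hB : 1 < B) : presInf B (fun s => s ^ 2) ≤ 1 :=
  csInf_le (presSet_bddBelow B) (one_mem_presSet hB)

lemma presInf_nonneg (B : ℝ) : 0 ≤ presInf B (fun s => s ^ 2) :=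
  Real.sInf_nonneg fun _ h => h.1

/-- Beyond the critical exponent the sums are eventually dominated by `A^{n s²} ρ^n`, `ρ < 1`,
for some `A < B`. -/
lemma partSum_upper {B s : ℝ} (hB : 1 < B) (hs : presInf B (fun s => s ^ 2) < s) :
    ∃ A ρ : ℝ, 1 < A ∧ A < B ∧ 0 < ρ ∧ ρ < 1 ∧
      ∀ᶠ n : ℕ in atTop, partSum s n ≤ ENNReal.ofReal ((A ^ (s ^ 2) * ρ) ^ n) := by
  have hB0 : 0 < B := by linarith
  obtain ⟨s₀, ⟨hs₀, P, hP, hlim⟩, hlt⟩ :=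
    exists_lt_of_csInf_lt ⟨1, one_mem_presSet hB⟩ (by rwa [presInf_eq] at hs)
  have hs0 : 0 < s := lt_of_le_of_lt hs₀ hlt
  have hsq : s₀ ^ 2 < s ^ 2 := by nlinarith
  have hlB : 0 < Real.log B := Real.log_pos hB
  -- the exponent `s₀² log B + ε` is to stay strictly below `s² log A`
  obtain ⟨r, hr0, hr1⟩ : ∃ r : ℝ, max 0 (s₀ ^ 2 / s ^ 2) < r ∧ r < 1 := by
    apply exists_between
    rw [max_lt_iff]
    exact ⟨one_pos, by rw [div_lt_one (by positivity)]; exact hsq⟩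
  obtain ⟨hr2, hr3⟩ := max_lt_iff.1 hr0
  rw [div_lt_iff₀ (by positivity)] at hr3
  obtain ⟨ε, hε0, hε1⟩ : ∃ ε : ℝ, 0 < ε ∧ ε < (r * s ^ 2 - s₀ ^ 2) * Real.log B :=
    exists_between (mul_pos (by linarith) hlB)
  have hA : B ^ r < B := by
    conv_rhs => rw [← Real.rpow_one B]
    exact Real.rpow_lt_rpow_of_exponent_lt hB hr1
  refine ⟨B ^ r, Real.exp (ε - (r * s ^ 2 - s₀ ^ 2) * Real.log B),
    Real.one_lt_rpow hB hr2, hA, Real.exp_pos _, ?_, ?_⟩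
  · rw [Real.exp_lt_one_iff]; linarith
  have hev : ∀ᶠ n : ℕ in atTop,
      (((n : ℝ)⁻¹ : ℝ) : EReal) * ENNReal.log (presSum B (s₀ ^ 2) s₀ n) < ((ε : ℝ) : EReal) :=
    hlim.eventually_lt_const (lt_of_le_of_lt hP (by exact_mod_cast hε0))
  filter_upwards [hev, eventually_gt_atTop 0] with n hn hn0
  have hn0' : (0 : ℝ) < n := by exact_mod_cast hn0
  refine (partSum_anti hlt.le n).trans ?_
  have hnt : presSum B (s₀ ^ 2) s₀ n ≠ ⊤ := by
    intro h
    rw [h, ENNReal.log_top, EReal.coe_mul_top_of_pos (by positivity)] at hn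
    simp at hn
  have hnz : presSum B (s₀ ^ 2) s₀ n ≠ 0 := by
    rw [presSum_eq hB0]
    refine mul_ne_zero ?_ (partSum_ne_zero hs₀ n)
    rw [Ne, ENNReal.ofReal_eq_zero, not_le]; positivity
  have hpt : partSum s₀ n ≠ ⊤ := by
    intro h
    apply hnt
    rw [presSum_eq hB0, h, ENNReal.mul_top]
    rw [Ne, ENNReal.ofReal_eq_zero, not_le]; positivity
  rw [ENNReal.log_pos_real hnz hnt, ← EReal.coe_mul, EReal.coe_lt_coe_iff, inv_mul_lt_iff₀ hn0'] at hn
  have hps := ENNReal.toReal_pos (partSum_ne_zero hs₀ n) hpt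
  rw [presSum_eq hB0, ENNReal.toReal_mul, ENNReal.toReal_ofReal (by positivity),
    Real.log_mul (by positivity) hps.ne', Real.log_rpow hB0] at hn
  rw [← ENNReal.ofReal_toReal hpt]
  apply ENNReal.ofReal_le_ofReal
  rw [← Real.log_le_log_iff hps (by positivity), Real.log_pow, Real.log_mul (by positivity)
    (by positivity), Real.log_exp, Real.log_rpow (by positivity), Real.log_rpow hB0]
  have : (n : ℝ) * (s ^ 2 * (r * Real.log B) + (ε - (r * s ^ 2 - s₀ ^ 2) * Real.log B)) =
      n * ε + n * s₀ ^ 2 * Real.log B := by ring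
  rw [this]
  linarith

/-- Below the critical exponent the sums beat `K · C^{n s²}` for every `K` and some `C > B`
as close to `B` as desired. -/
lemma partSum_lower {B s D : ℝ} (hB : 1 < B) (hs0 : 0 ≤ s) (hD : B < D)
    (hs : s < presInf B (fun s => s ^ 2)) :
    ∃ C : ℝ, B < C ∧ C < D ∧ ∀ K : ℝ, ∃ n : ℕ,
      ENNReal.ofReal (K * C ^ (s ^ 2 * n)) < partSum s n := by
  have hB0 : 0 < B := by linarith
  have hnot : s ∉ presSet B := fun h => by
    have := csInf_le (presSet_bddBelow B) h
    rw [← presInf_eq] at this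
    linarith
  by_cases hfin : ∀ n, partSum s n ≠ ⊤
  swap
  · push Not at hfin
    obtain ⟨n, hn⟩ := hfin
    obtain ⟨C, h1, h2⟩ := exists_between hD
    exact ⟨C, h1, h2, fun K => ⟨n, by rw [hn]; exact ENNReal.ofReal_lt_top⟩⟩
  obtain ⟨P, hP1, hP2⟩ := presSum_limit (c := s ^ 2) hB0 hs0 hfin
  have hP : 0 < P := by
    by_contra h
    exact hnot ⟨hs0, P, by exact_mod_cast not_lt.1 h, hP2⟩
  obtain ⟨C, hC1, hC2⟩ : ∃ C : ℝ, B < C ∧ C < min D (B * Real.exp (P / (2 * (s ^ 2 + 1)))) := by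
    apply exists_between
    rw [lt_min_iff]
    refine ⟨hD, ?_⟩
    conv_lhs => rw [← mul_one B]
    gcongr
    rw [Real.one_lt_exp_iff]
    positivity
  obtain ⟨hC2, hC3⟩ := lt_min_iff.1 hC2
  refine ⟨C, hC1, hC2, fun K => ?_⟩
  have hC0 : 0 < C := by linarith
  have hlC : s ^ 2 * Real.log C ≤ s ^ 2 * Real.log B + P / 2 := by
    have h1 := Real.log_le_log hC0 hC3.le
    rw [Real.log_mul hB0.ne' (Real.exp_pos _).ne', Real.log_exp] at h1
    have h2 : s ^ 2 * (P / (2 * (s ^ 2 + 1))) ≤ P / 2 := by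
      rw [mul_div_assoc', div_le_div_iff₀ (by positivity) (by norm_num)]
      nlinarith
    nlinarith [sq_nonneg s]
  have hev : ∀ᶠ n : ℕ in atTop, 3 * P / 4 < Real.log (presSum B (s ^ 2) s n).toReal / n :=
    hP1.eventually_const_lt (by linarith)
  have hK : ∀ᶠ n : ℕ in atTop, Real.log (|K| + 1) < (n : ℝ) * (P / 4) :=
    (tendsto_natCast_atTop_atTop.atTop_mul_const (by positivity)).eventually_gt_atTop _
  obtain ⟨n, hn, hn2, hn3⟩ := (hev.and (hK.and (eventually_gt_atTop 0))).exists
  have hn0 : (0 : ℝ) < n := by exact_mod_cast hn3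
  refine ⟨n, ?_⟩
  have hps := ENNReal.toReal_pos (partSum_ne_zero hs0 n) (hfin n)
  rw [lt_div_iff₀ hn0, presSum_eq hB0, ENNReal.toReal_mul, ENNReal.toReal_ofReal (by positivity),
    Real.log_mul (by positivity) hps.ne', Real.log_rpow hB0] at hn
  rw [← ENNReal.ofReal_toReal (hfin n)]
  rw [ENNReal.ofReal_lt_ofReal_iff hps]
  have h3 : (|K| + 1) * C ^ (s ^ 2 * n) < (partSum s n).toReal := by
    rw [← Real.log_lt_log_iff (by positivity) hps, Real.log_mul (by positivity) (by positivity),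
      Real.log_rpow hC0]
    nlinarith
  refine lt_of_le_of_lt ?_ h3
  gcongr
  linarith [le_abs_self K]

/-! ### The upper bound -/

/-- The Hausdorff–Cantelli lemma: a limsup set with summable `s`-dimensional cost is `μH[s]`-null. -/
lemma hausdorffMeasure_limsup_eq_zero {ι : ℕ → Type} [∀ n, Countable (ι n)]
    (T : ∀ n, ι n → Set ℝ) {s : ℝ} (hs : 0 < s) (f : ℕ → ℝ≥0∞)
    (hf : ∀ᶠ n in atTop, ∑' i, Metric.ediam (T n i) ^ s ≤ f n) (hsum : ∑' n, f n ≠ ⊤) :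
    μH[s] {x : ℝ | ∃ᶠ n in atTop, ∃ i, x ∈ T n i} = 0 := by
  have htail : Tendsto (fun N => ∑' k, f (k + N)) atTop (𝓝 0) := ENNReal.tendsto_sum_nat_add f hsum
  obtain ⟨N₀, hN₀⟩ := eventually_atTop.1 hf
  have hr : Tendsto (fun N => (∑' k, f (k + N)) ^ (1 / s)) atTop (𝓝 0) := by
    have := (ENNReal.continuous_rpow_const (y := 1 / s)).tendsto 0 |>.comp htail
    rwa [ENNReal.zero_rpow_of_pos (by positivity)] at this
  have hcost : ∀ N, N₀ ≤ N → ∑' p : (Σ k, ι (k + N)), Metric.ediam (T (p.1 + N) p.2) ^ s ≤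
      ∑' k, f (k + N) := by
    intro N hN
    rw [ENNReal.tsum_sigma' (fun p : (Σ k, ι (k + N)) => Metric.ediam (T (p.1 + N) p.2) ^ s)]
    exact ENNReal.tsum_le_tsum fun k => hN₀ _ (by omega)
  have key := Measure.hausdorffMeasure_le_liminf_tsum (X := ℝ) (β := ℕ) (ι := fun N => Σ k, ι (k + N)) s
    {x : ℝ | ∃ᶠ n in atTop, ∃ i, x ∈ T n i} (l := atTop)
    (fun N => (∑' k, f (k + N)) ^ (1 / s)) hr (fun N p => T (p.1 + N) p.2) ?_ ?_
  · refine le_antisymm (key.trans ?_) bot_le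
    have h0 : Tendsto (fun N => ∑' p : (Σ k, ι (k + N)), Metric.ediam (T (p.1 + N) p.2) ^ s)
        atTop (𝓝 0) := by
      refine tendsto_of_tendsto_of_tendsto_of_le_of_le' tendsto_const_nhds htail
        (Eventually.of_forall fun _ => bot_le) ?_
      filter_upwards [eventually_ge_atTop N₀] with N hN using hcost N hN
    exact h0.liminf_eq.le
  · filter_upwards [eventually_ge_atTop N₀] with N hN p
    have h1 := (ENNReal.le_tsum p).trans (hcost N hN)
    have h2 := ENNReal.rpow_le_rpow h1 (z := 1 / s) (by positivity)
    rwa [← ENNReal.rpow_mul, mul_one_div_cancel hs.ne', ENNReal.rpow_one] at h2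
  · refine Eventually.of_forall fun N x hx => ?_
    obtain ⟨n, hn, i, hi⟩ := (frequently_atTop.1 hx) N
    rw [Set.mem_iUnion]
    obtain ⟨k, rfl⟩ := Nat.exists_eq_add_of_le' hn
    exact ⟨⟨k, i⟩, hi⟩

lemma ediam_cfPhi_image {l : List ℕ} (h : PosWord l) (y : ℝ) :
    Metric.ediam (cfPhi l '' Set.Icc 0 y) ≤ ENNReal.ofReal (y / (contQ l : ℝ) ^ 2) := by
  refine Metric.ediam_le ?_
  rintro _ ⟨t, ht, rfl⟩ _ ⟨t', ht', rfl⟩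
  rw [edist_dist, Real.dist_eq]
  apply ENNReal.ofReal_le_ofReal
  refine (cfPhi_dist_le h ht.1 ht'.1).trans ?_
  have : |t - t'| ≤ y := by rw [abs_le]; constructor <;> linarith [ht.1, ht.2, ht'.1, ht'.2]
  gcongr

lemma sum_rpow_neg_le {s : ℝ} (hs0 : 0 < s) (hs1 : s < 1) (k : ℕ) :
    ∑ i ∈ Finset.range k, ((i : ℝ) + 1) ^ (-s) ≤ (1 - s)⁻¹ * (k : ℝ) ^ (1 - s) := by
  induction k with
  | zero => simp [Real.zero_rpow (by linarith : (1 - s) ≠ 0)]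
  | succ k ih =>
    rw [Finset.sum_range_succ]
    have hk : (0 : ℝ) < k + 1 := by positivity
    -- Bernoulli's inequality `(1 - 1/(k+1))^(1-s) ≤ 1 - (1-s)/(k+1)`
    have hb := rpow_one_add_le_one_add_mul_self (s := -(1 / ((k : ℝ) + 1))) (p := 1 - s)
      (by rw [neg_le_neg_iff, div_le_one hk]; linarith [(Nat.cast_nonneg k : (0 : ℝ) ≤ k)])
      (by linarith) (by linarith)
    have h1 : (1 + -(1 / ((k : ℝ) + 1))) = k / (k + 1) := by field_simp; ring
    rw [h1, Real.div_rpow (by positivity) hk.le, div_le_iff₀ (by positivity)] at hb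
    have h2 : ((k : ℝ) + 1) ^ (-s) = ((k : ℝ) + 1) ^ (1 - s) / (k + 1) := by
      rw [← Real.rpow_sub_one hk.ne']; congr 1; ring
    have h3 : (k : ℝ) ^ (1 - s) + (1 - s) * ((k : ℝ) + 1) ^ (-s) ≤ ((k : ℝ) + 1) ^ (1 - s) := by
      rw [h2]
      refine (add_le_add_left hb _).trans (le_of_eq ?_)
      field_simp
      ring
    push_cast
    have h4 : (0 : ℝ) < 1 - s := by linarith
    calc _ ≤ (1 - s)⁻¹ * (k : ℝ) ^ (1 - s) + ((k : ℝ) + 1) ^ (-s) := by gcongr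
      _ = (1 - s)⁻¹ * ((k : ℝ) ^ (1 - s) + (1 - s) * ((k : ℝ) + 1) ^ (-s)) := by
        field_simp
      _ ≤ _ := by gcongr

lemma cost_aux {s y q : ℝ} (hy : 0 ≤ y) (hq : 0 < q) :
    (y / q ^ 2) ^ s = y ^ s * q ^ (-2 * s) := by
  rw [Real.div_rpow hy (by positivity), ← Real.rpow_natCast, ← Real.rpow_mul hq.le, div_eq_mul_inv,
    ← Real.rpow_neg hq.le]
  congr 2
  push_cast
  ring

/-- If `a_{n+1} a_{n+2} ≥ A ^ (n+1)`, then either `a_{n+1} ≥ A ^ (s (n+1))`, and the point lies in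
the initial piece `T₁` of its cylinder of order `n`, or `a_{n+1} = i < A ^ (s (n+1))` and
`a_{n+2} ≥ A ^ (n+1) / i`, and it lies in the piece `T₂` of a cylinder of order `n + 1`. With the
cut at the exponent `s`, both families of pieces cost about `A ^ (-(n+1) s²) q_n ^ (-2s)` per word of
length `n`. -/
lemma hausdorffMeasure_Fset_eq_zero {Φ : ℕ → ℝ} {A ρ s : ℝ} (hs0 : 0 < s) (hs1 : s < 1)
    (hA : 1 < A) (hρ0 : 0 < ρ) (hρ1 : ρ < 1) (hΦA : ∀ᶠ n : ℕ in atTop, A ^ n ≤ Φ n)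
    (hpart : ∀ᶠ n : ℕ in atTop, partSum s n ≤ ENNReal.ofReal ((A ^ (s ^ 2) * ρ) ^ n)) :
    μH[s] (Fset Φ) = 0 := by
  have hA0 : 0 < A := by linarith
  set T₁ : ∀ n : ℕ, (Fin n → ℕ+) → Set ℝ := fun n u =>
    cfPhi (tupleWord u) '' Set.Icc 0 ((A ^ (n + 1)) ^ (-s)) with hT₁
  set K : ℕ → ℕ := fun n => ⌊(A ^ (n + 1)) ^ s⌋₊ with hK
  set T₂ : ∀ n : ℕ, ((Fin n → ℕ+) × Fin (K n)) → Set ℝ := fun n p =>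
    cfPhi (tupleWord p.1 ++ [(p.2 : ℕ) + 1]) '' Set.Icc 0 ((((p.2 : ℕ) : ℝ) + 1) / A ^ (n + 1))
    with hT₂
  -- `A^{-(n+1)s²} Σ q_n^{-2s}` decays geometrically
  have hgeo : ∀ᶠ n : ℕ in atTop,
      ENNReal.ofReal ((A ^ (n + 1)) ^ (-(s ^ 2))) * partSum s n ≤ ENNReal.ofReal (ρ ^ n) := by
    filter_upwards [hpart] with n hn
    refine (mul_le_mul_right hn _).trans ?_
    rw [← ENNReal.ofReal_mul (by positivity)]
    apply ENNReal.ofReal_le_ofReal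
    rw [mul_pow, ← mul_assoc]
    have h1 : (A ^ (n + 1)) ^ (-(s ^ 2)) * (A ^ (s ^ 2)) ^ n = A ^ (-(s ^ 2)) := by
      rw [← Real.rpow_natCast A (n + 1), ← Real.rpow_natCast (A ^ (s ^ 2)) n, ← Real.rpow_mul hA0.le,
        ← Real.rpow_mul hA0.le,
        ← Real.rpow_add hA0]
      congr 1; push_cast; ring
    rw [h1]
    have h2 : A ^ (-(s ^ 2)) ≤ 1 :=
      Real.rpow_le_one_of_one_le_of_nonpos hA.le (by nlinarith)
    have := pow_nonneg hρ0.le n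
    nlinarith
  have hgsum : ∀ c : ℝ, 0 ≤ c → ∑' n : ℕ, ENNReal.ofReal (c * ρ ^ n) ≠ ⊤ := by
    intro c hc
    rw [← ENNReal.ofReal_tsum_of_nonneg (fun n => by positivity)
      ((summable_geometric_of_lt_one hρ0.le hρ1).mul_left c)]
    exact ENNReal.ofReal_ne_top
  have hc₁ : μH[s] {x : ℝ | ∃ᶠ n in atTop, ∃ i, x ∈ T₁ n i} = 0 := by
    refine hausdorffMeasure_limsup_eq_zero T₁ hs0 (fun n => ENNReal.ofReal (1 * ρ ^ n)) ?_
      (hgsum 1 zero_le_one)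
    filter_upwards [hgeo] with n hn
    rw [one_mul]
    refine le_trans ?_ hn
    rw [partSum, ← ENNReal.tsum_mul_left]
    refine ENNReal.tsum_le_tsum fun u => ?_
    have hq := contQ_pos (tupleWord_pos u)
    refine (ENNReal.rpow_le_rpow (ediam_cfPhi_image (tupleWord_pos u) _) hs0.le).trans ?_
    rw [ENNReal.ofReal_rpow_of_nonneg (by positivity) hs0.le, cost_aux (by positivity) hq,
      ENNReal.ofReal_mul (by positivity), ← Real.rpow_mul (by positivity)]
    apply le_of_eq
    congr 3
    ring
  have hc₂ : μH[s] {x : ℝ | ∃ᶠ n in atTop, ∃ i, x ∈ T₂ n i} = 0 := by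
    have hs1' : 0 < 1 - s := by linarith
    refine hausdorffMeasure_limsup_eq_zero T₂ hs0 (fun n => ENNReal.ofReal ((1 - s)⁻¹ * ρ ^ n)) ?_
      (hgsum _ (by positivity))
    filter_upwards [hgeo] with n hn
    rw [ENNReal.ofReal_mul (by positivity)]
    refine le_trans ?_ (mul_le_mul_right hn _)
    rw [partSum, ← ENNReal.tsum_mul_left, ← ENNReal.tsum_mul_left, ENNReal.tsum_prod']
    refine ENNReal.tsum_le_tsum fun u => ?_
    have hq := contQ_pos (tupleWord_pos u)
    rw [tsum_fintype]
    have hX : 0 < A ^ (n + 1) := by positivity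
    have hterm : ∀ i : Fin (K n), Metric.ediam (T₂ n (u, i)) ^ s ≤
        ENNReal.ofReal ((A ^ (n + 1)) ^ (-s) * (contQ (tupleWord u) : ℝ) ^ (-2 * s) *
          (((i : ℕ) : ℝ) + 1) ^ (-s)) := by
      intro i
      have hpw : PosWord (tupleWord u ++ [(i : ℕ) + 1]) :=
        (tupleWord_pos u).append (by intro a ha; simp at ha; omega)
      refine (ENNReal.rpow_le_rpow (ediam_cfPhi_image hpw _) hs0.le).trans ?_
      rw [ENNReal.ofReal_rpow_of_nonneg (by positivity) hs0.le]
      apply ENNReal.ofReal_le_ofReal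
      have hi : (0 : ℝ) < ((i : ℕ) : ℝ) + 1 := by positivity
      have hge : (((i : ℕ) : ℝ) + 1) * contQ (tupleWord u) ≤
          (contQ (tupleWord u ++ [(i : ℕ) + 1]) : ℝ) := by
        rw [contQ_concat]; push_cast
        linarith [(Nat.cast_nonneg (prevQ (tupleWord u)) : (0 : ℝ) ≤ _)]
      have e1 : (((i : ℕ) : ℝ) + 1) / A ^ (n + 1) / (contQ (tupleWord u ++ [(i : ℕ) + 1]) : ℝ) ^ 2 ≤
          ((A ^ (n + 1))⁻¹ * (((i : ℕ) : ℝ) + 1)⁻¹) / (contQ (tupleWord u) : ℝ) ^ 2 := by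
        calc _ ≤ (((i : ℕ) : ℝ) + 1) / A ^ (n + 1) /
              ((((i : ℕ) : ℝ) + 1) * contQ (tupleWord u)) ^ 2 := by gcongr
          _ = _ := by field_simp
      refine (Real.rpow_le_rpow (by positivity) e1 hs0.le).trans (le_of_eq ?_)
      rw [cost_aux (by positivity) hq, Real.mul_rpow (by positivity) (by positivity),
        Real.inv_rpow hX.le, Real.inv_rpow hi.le, ← Real.rpow_neg hX.le, ← Real.rpow_neg hi.le]
      ring
    refine (Finset.sum_le_sum fun i _ => hterm i).trans ?_
    rw [← ENNReal.ofReal_sum_of_nonneg (fun i _ => by positivity), ← Finset.mul_sum,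
      Fin.sum_univ_eq_sum_range (fun i : ℕ => ((i : ℝ) + 1) ^ (-s)),
      ← ENNReal.ofReal_mul (by positivity), ← ENNReal.ofReal_mul (by positivity)]
    apply ENNReal.ofReal_le_ofReal
    have hfl : ((K n : ℕ) : ℝ) ≤ (A ^ (n + 1)) ^ s := Nat.floor_le (by positivity)
    have e2 : ((K n : ℕ) : ℝ) ^ (1 - s) ≤ (A ^ (n + 1)) ^ (s * (1 - s)) := by
      rw [Real.rpow_mul hX.le]
      exact Real.rpow_le_rpow (by positivity) hfl hs1'.le
    have e3 : (A ^ (n + 1)) ^ (-(s ^ 2)) = (A ^ (n + 1)) ^ (-s) * (A ^ (n + 1)) ^ (s * (1 - s)) := by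
      rw [← Real.rpow_add hX]; congr 1; ring
    calc _ ≤ (A ^ (n + 1)) ^ (-s) * (contQ (tupleWord u) : ℝ) ^ (-2 * s) *
          ((1 - s)⁻¹ * (A ^ (n + 1)) ^ (s * (1 - s))) := by
          gcongr
          exact (sum_rpow_neg_le hs0 hs1 _).trans (by gcongr)
      _ = _ := by rw [e3]; ring
  refine measure_mono_null ?_ (measure_union_null hc₁ hc₂)
  rintro x ⟨⟨hx0, hx1⟩, hirr, hfreq, -⟩
  have hx0' : 0 < x := lt_of_le_of_ne hx0 hirr.ne_zero.symm
  have hfreq2 : ∃ᶠ n in atTop, A ^ (n + 1) ≤ (cfA (n + 2) x : ℝ) * (cfA (n + 1) x : ℝ) := by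
    have h1 := hfreq.and_eventually hΦA
    rw [frequently_atTop] at h1 ⊢
    intro N
    obtain ⟨n, hn, h2, h3⟩ := h1 (N + 1)
    obtain ⟨k, rfl⟩ : ∃ k, n = k + 1 := ⟨n - 1, by omega⟩
    exact ⟨k, by omega, h3.trans h2⟩
  have hor : ∃ᶠ n in atTop, (∃ i, x ∈ T₁ n i) ∨ (∃ i, x ∈ T₂ n i) := by
    refine hfreq2.mono fun n hn => ?_
    obtain ⟨-, hg0, hg1⟩ := gaussMap_iterate_irrational hirr hx0' hx1 n
    obtain ⟨-, hg0', hg1'⟩ := gaussMap_iterate_irrational hirr hx0' hx1 (n + 1)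
    have hX : 0 < A ^ (n + 1) := by positivity
    have ha : (1 : ℝ) ≤ cfA (n + 1) x := by exact_mod_cast cfA_pos hirr hx0' hx1 n
    have hb : (1 : ℝ) ≤ cfA (n + 2) x := by exact_mod_cast cfA_pos hirr hx0' hx1 (n + 1)
    have hu : tupleWord (fun i : Fin n => (⟨cfA (i + 1) x, cfA_pos hirr hx0' hx1 i⟩ : ℕ+)) =
        cfWord x n := rfl
    rcases le_or_gt ((A ^ (n + 1)) ^ s) (cfA (n + 1) x : ℝ) with hcase | hcase
    · left
      refine ⟨fun i => ⟨cfA (i + 1) x, cfA_pos hirr hx0' hx1 i⟩, gaussMap^[n] x, ⟨hg0.le, ?_⟩, ?_⟩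
      · refine (gaussMap_iterate_le hirr hx0' hx1 n).trans ?_
        rw [Real.rpow_neg hX.le, ← one_div]
        gcongr
      · rw [hu, cfPhi_cfWord hirr hx0' hx1 n]
    · right
      have hlt : cfA (n + 1) x - 1 < K n := by
        have h1 : cfA (n + 1) x ≤ K n := Nat.le_floor hcase.le
        have h2 := cfA_pos hirr hx0' hx1 n
        omega
      have hsub : cfA (n + 1) x - 1 + 1 = cfA (n + 1) x :=
        Nat.sub_add_cancel (cfA_pos hirr hx0' hx1 n)
      have hsubR : (((cfA (n + 1) x - 1 : ℕ) : ℝ) + 1) = cfA (n + 1) x := by exact_mod_cast hsub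
      refine ⟨(fun i => ⟨cfA (i + 1) x, cfA_pos hirr hx0' hx1 i⟩, ⟨_, hlt⟩),
        gaussMap^[n + 1] x, ⟨hg0'.le, ?_⟩, ?_⟩
      · refine (gaussMap_iterate_le hirr hx0' hx1 (n + 1)).trans ?_
        simp only [hsubR]
        rw [div_le_div_iff₀ (by linarith) hX]
        linarith
      · simp only [hsub]
        rw [hu, ← cfWord_succ, cfPhi_cfWord hirr hx0' hx1 (n + 1)]
  rcases frequently_or_distrib.1 hor with h | h
  exacts [Or.inl h, Or.inr h]

lemma eventually_pow_le {Φ : ℕ → ℝ} (hΦ1 : ∀ n, 1 < Φ n) {A B : ℝ} (hA : 1 < A) (hAB : A < B)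
    (hlogB : (Real.log B : EReal) =
      liminf (fun n : ℕ => ((Real.log (Φ n) / n : ℝ) : EReal)) atTop) :
    ∀ᶠ n : ℕ in atTop, A ^ n ≤ Φ n := by
  have h1 : (Real.log A : EReal) <
      liminf (fun n : ℕ => ((Real.log (Φ n) / n : ℝ) : EReal)) atTop := by
    rw [← hlogB]; exact_mod_cast Real.log_lt_log (by linarith) hAB
  filter_upwards [eventually_lt_of_lt_liminf h1, eventually_gt_atTop 0] with n hn hn0
  have hn0' : (0 : ℝ) < n := by exact_mod_cast hn0
  rw [EReal.coe_lt_coe_iff, lt_div_iff₀ hn0'] at hn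
  rw [← Real.log_le_log_iff (by positivity) (by linarith [hΦ1 n]), Real.log_pow]
  linarith

lemma frequently_le_pow {Φ : ℕ → ℝ} (hΦ1 : ∀ n, 1 < Φ n) {B C : ℝ} (hB : 1 < B) (hBC : B < C)
    (hlogB : (Real.log B : EReal) =
      liminf (fun n : ℕ => ((Real.log (Φ n) / n : ℝ) : EReal)) atTop) :
    ∃ᶠ n : ℕ in atTop, Φ n ≤ C ^ n := by
  have hC : 0 < C := by linarith
  have h1 : liminf (fun n : ℕ => ((Real.log (Φ n) / n : ℝ) : EReal)) atTop <
      (Real.log C : EReal) := by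
    rw [← hlogB]; exact_mod_cast Real.log_lt_log (by linarith) hBC
  refine ((frequently_lt_of_liminf_lt (h := h1)).and_eventually
    (eventually_gt_atTop 0)).mono fun n ⟨hn, hn0⟩ => ?_
  have hn0' : (0 : ℝ) < n := by exact_mod_cast hn0
  rw [EReal.coe_lt_coe_iff, div_lt_iff₀ hn0'] at hn
  rw [← Real.log_le_log_iff (by linarith [hΦ1 n]) (by positivity), Real.log_pow]
  linarith

lemma dimH_Fset_le (Φ : ℕ → ℝ) (hΦ1 : ∀ n, 1 < Φ n) (B : ℝ) (hB : 1 < B)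
    (hlogB : (Real.log B : EReal) =
      liminf (fun n : ℕ => ((Real.log (Φ n) / n : ℝ) : EReal)) atTop) :
    dimH (Fset Φ) ≤ ENNReal.ofReal (presInf B (fun s => s ^ 2)) := by
  have ht0 := presInf_nonneg B
  set t := presInf B (fun s => s ^ 2) with ht
  have hle1 : dimH (Fset Φ) ≤ 1 := by
    rw [← Real.dimH_univ]; exact dimH_mono (Set.subset_univ _)
  rcases le_or_gt 1 t with h1 | h1
  · exact hle1.trans (by rw [← ENNReal.ofReal_one]; exact ENNReal.ofReal_le_ofReal h1)
  refine le_of_forall_gt fun c hc => ?_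
  -- an exponent strictly between the critical one and `min 1 c`
  obtain ⟨s, hs1, hs2⟩ : ∃ s : ℝ≥0, ENNReal.ofReal t < s ∧ (s : ℝ≥0∞) < min 1 c :=
    ENNReal.lt_iff_exists_nnreal_btwn.1
      (lt_min (by rw [← ENNReal.ofReal_one, ENNReal.ofReal_lt_ofReal_iff one_pos]; exact h1) hc)
  obtain ⟨hs2, hs3⟩ := lt_min_iff.1 hs2
  have hts : t < s := by
    rw [← ENNReal.ofReal_coe_nnreal, ENNReal.ofReal_lt_ofReal_iff'] at hs1; exact hs1.1
  obtain ⟨A, ρ, hA, hAB, hρ0, hρ1, hpart⟩ := partSum_upper hB hts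
  have h0 := hausdorffMeasure_Fset_eq_zero (Φ := Φ) (lt_of_le_of_lt ht0 hts)
    (by exact_mod_cast hs2) hA hρ0 hρ1 (eventually_pow_le hΦ1 hA hAB hlogB) hpart
  refine lt_of_le_of_lt (dimH_le_of_hausdorffMeasure_ne_top (d := s) ?_) hs3
  rw [h0]; simp

/-! ### Points coded by sequences of blocks -/

/-- A block is a word of positive integers starting with the letter `2`. The leading `2` makes
every `cfPhi` of a block a `1/4`-contraction of `[0,1]` into `[1/3,1/2]`. -/
def Block : Type := {w : List ℕ // PosWord w ∧ ∃ v, w = 2 :: v}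

instance : MeasurableSpace Block := ⊤
instance : DiscreteMeasurableSpace Block := ⟨fun _ => trivial⟩
instance : Countable Block := inferInstanceAs (Countable {w : List ℕ // PosWord w ∧ ∃ v, w = 2 :: v})

lemma Block.cfPhi_mem (w : Block) {t : ℝ} (ht : 0 ≤ t) (ht1 : t ≤ 1) :
    1 / 3 ≤ cfPhi w.1 t ∧ cfPhi w.1 t ≤ 1 / 2 := by
  obtain ⟨w, hw, v, rfl⟩ := w
  have h := (posWord_cons.1 hw).2
  have h1 := cfPhi_nonneg v ht
  have h2 := cfPhi_le_one h ht ht1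
  simp only [cfPhi]
  push_cast
  constructor
  · apply one_div_le_one_div_of_le <;> linarith
  · apply one_div_le_one_div_of_le <;> linarith

lemma Block.two_le_contQ (w : Block) : 2 ≤ contQ w.1 := by
  obtain ⟨w, hw, v, rfl⟩ := w
  have h := contQ_append_ge [2] v
  have h2 := (contQ_bounds (posWord_cons.1 hw).2).1
  have h3 : contQ [2] = 2 := rfl
  simp only [List.singleton_append] at h
  rw [h3] at h
  change 2 ≤ contQ (2 :: v)
  omega

lemma Block.length_pos (w : Block) : 1 ≤ w.1.length := by
  obtain ⟨w, hw, v, rfl⟩ := w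
  simp

lemma Block.cfPhi_contract (w : Block) {t t' : ℝ} (ht : 0 ≤ t) (ht' : 0 ≤ t') :
    |cfPhi w.1 t - cfPhi w.1 t'| ≤ |t - t'| / 4 := by
  refine (cfPhi_dist_le w.2.1 ht ht').trans ?_
  have : (2 : ℝ) ≤ contQ w.1 := by exact_mod_cast w.two_le_contQ
  gcongr
  nlinarith

/-- The point `[ω 0, …, ω (n-1), 1/3]` obtained from the first `n` blocks of `ω`. -/
noncomputable def approxPt : ℕ → (ℕ → Block) → ℝ
  | 0, _ => 1 / 3
  | n + 1, ω => cfPhi (ω 0).1 (approxPt n fun i => ω (i + 1))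

lemma approxPt_mem (n : ℕ) (ω : ℕ → Block) : 1 / 3 ≤ approxPt n ω ∧ approxPt n ω ≤ 1 / 2 := by
  induction n generalizing ω with
  | zero => norm_num [approxPt]
  | succ n ih =>
    have := ih fun i => ω (i + 1)
    exact (ω 0).cfPhi_mem (by linarith) (by linarith)

lemma approxPt_dist (n : ℕ) (ω : ℕ → Block) :
    |approxPt n ω - approxPt (n + 1) ω| ≤ 1 * (1 / 4) ^ n := by
  induction n generalizing ω with
  | zero =>
    have h1 := approxPt_mem 0 ω
    have h2 := approxPt_mem 1 ω
    rw [abs_le]; constructor <;> norm_num <;> linarith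
  | succ n ih =>
    have h := ih fun i => ω (i + 1)
    refine ((ω 0).cfPhi_contract (by linarith [approxPt_mem n fun i => ω (i + 1)])
      (by linarith [approxPt_mem (n + 1) fun i => ω (i + 1)])).trans ?_
    rw [pow_succ]
    linarith

/-- The real number whose continued fraction expansion is the concatenation of the blocks of `ω`. -/
noncomputable def limPt (ω : ℕ → Block) : ℝ := limUnder atTop fun n => approxPt n ω

lemma tendsto_approxPt (ω : ℕ → Block) : Tendsto (fun n => approxPt n ω) atTop (𝓝 (limPt ω)) := by
  apply CauchySeq.tendsto_limUnder
  refine cauchySeq_of_le_geometric (1 / 4) 1 (by norm_num) fun n => ?_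
  rw [Real.dist_eq]
  exact approxPt_dist n ω

lemma limPt_mem (ω : ℕ → Block) : 1 / 3 ≤ limPt ω ∧ limPt ω ≤ 1 / 2 :=
  ⟨ge_of_tendsto' (tendsto_approxPt ω) fun n => (approxPt_mem n ω).1,
    le_of_tendsto' (tendsto_approxPt ω) fun n => (approxPt_mem n ω).2⟩

lemma limPt_eq (ω : ℕ → Block) : limPt ω = cfPhi (ω 0).1 (limPt fun i => ω (i + 1)) := by
  have h1 := (tendsto_add_atTop_iff_nat 1).2 (tendsto_approxPt ω)
  refine tendsto_nhds_unique h1 ?_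
  have h2 := tendsto_approxPt fun i => ω (i + 1)
  rw [tendsto_iff_dist_tendsto_zero] at h2 ⊢
  refine squeeze_zero (fun _ => dist_nonneg) (fun n => ?_) h2
  rw [Real.dist_eq, Real.dist_eq]
  refine ((ω 0).cfPhi_contract (by linarith [approxPt_mem n fun i => ω (i + 1)])
    (by linarith [limPt_mem fun i => ω (i + 1)])).trans ?_
  have := abs_nonneg ((approxPt n fun i => ω (i + 1)) - limPt fun i => ω (i + 1))
  linarith

/-- The concatenation of an initial word `u` and the first `j` blocks of `ω`. -/
def preWord (u : List ℕ) (ω : ℕ → Block) : ℕ → List ℕ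
  | 0 => u
  | j + 1 => preWord u ω j ++ (ω j).1

lemma preWord_pos {u : List ℕ} (hu : PosWord u) (ω : ℕ → Block) (j : ℕ) :
    PosWord (preWord u ω j) := by
  induction j with
  | zero => exact hu
  | succ j ih => exact ih.append (ω j).2.1

lemma preWord_congr (u : List ℕ) {ω ω' : ℕ → Block} {j : ℕ} (h : ∀ i < j, ω i = ω' i) :
    preWord u ω j = preWord u ω' j := by
  induction j with
  | zero => rfl
  | succ j ih =>
    rw [preWord, preWord, ih fun i hi => h i (by omega), h j (by omega)]

lemma le_length_preWord (u : List ℕ) (ω : ℕ → Block) (j : ℕ) : j ≤ (preWord u ω j).length := by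
  induction j with
  | zero => simp
  | succ j ih =>
    have := (ω j).length_pos
    rw [preWord, List.length_append]; omega

lemma two_pow_le_contQ_preWord {u : List ℕ} (hu : PosWord u) (ω : ℕ → Block) (j : ℕ) :
    2 ^ j ≤ contQ (preWord u ω j) := by
  induction j with
  | zero => exact (contQ_bounds hu).1
  | succ j ih =>
    rw [preWord, pow_succ]
    exact (Nat.mul_le_mul ih (ω j).two_le_contQ).trans (contQ_append_ge _ _)

/-- The point coded by the initial word `u` and the block sequence `ω`. -/
noncomputable def codePt (u : List ℕ) (ω : ℕ → Block) : ℝ := cfPhi u (limPt ω)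

lemma codePt_eq (u : List ℕ) (ω : ℕ → Block) (j : ℕ) :
    codePt u ω = cfPhi (preWord u ω j) (limPt fun i => ω (i + j)) := by
  induction j with
  | zero => rfl
  | succ j ih =>
    rw [ih, limPt_eq, preWord, cfPhi_append]
    simp only [zero_add]
    congr 3
    ext i : 1
    congr 1
    omega

lemma measurable_cfPhi (w : List ℕ) : Measurable (cfPhi w) := by
  induction w with
  | nil => exact measurable_id
  | cons a w ih =>
    have : cfPhi (a :: w) = fun t => 1 / ((a : ℝ) + cfPhi w t) := by ext; rfl
    rw [this]
    exact (ih.const_add _).const_div _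

lemma measurable_approxPt (n : ℕ) : Measurable (approxPt n) := by
  induction n with
  | zero => exact measurable_const
  | succ n ih =>
    have h1 : Measurable fun p : Block × ℝ => cfPhi p.1.1 p.2 :=
      measurable_from_prod_countable_right fun w => measurable_cfPhi w.1
    have h2 : Measurable fun ω : ℕ → Block => fun i => ω (i + 1) :=
      measurable_pi_lambda _ fun i => measurable_pi_apply _
    exact h1.comp ((measurable_pi_apply 0).prodMk (ih.comp h2))

lemma measurable_codePt (u : List ℕ) : Measurable (codePt u) :=
  (measurable_cfPhi u).comp (measurable_of_tendsto_metrizable measurable_approxPt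
    (tendsto_pi_nhds.2 tendsto_approxPt))

/-- The Euclidean algorithm: the Gauss orbit of a rational reaches `0`. Hence a point all of whose
Gauss iterates are positive is irrational. -/
lemma exists_gaussMap_iterate_eq_zero (p : ℕ) :
    ∀ d : ℕ, ∃ n, gaussMap^[n] ((p : ℝ) / d) = 0 := by
  induction p using Nat.strong_induction_on with
  | _ p ih =>
    intro d
    rcases Nat.eq_zero_or_pos p with rfl | hp
    · exact ⟨0, by simp⟩
    rcases Nat.eq_zero_or_pos d with rfl | hd
    · exact ⟨0, by simp⟩
    obtain ⟨n, hn⟩ := ih (d % p) (Nat.mod_lt _ hp) p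
    refine ⟨n + 1, ?_⟩
    rw [Function.iterate_succ_apply]
    have hp' : (p : ℝ) ≠ 0 := by positivity
    have : gaussMap ((p : ℝ) / d) = ((d % p : ℕ) : ℝ) / p := by
      have h0 : (p : ℝ) / d ≠ 0 := by positivity
      rw [gaussMap, if_neg h0, one_div_div]
      have h1 : ⌊(d : ℝ) / p⌋ = ((d / p : ℕ) : ℤ) := by
        rw [← Nat.floor_div_eq_div (K := ℝ) d p, Int.natCast_floor_eq_floor (by positivity)]
      rw [h1]
      have h2 : (d : ℝ) = p * ((d / p : ℕ) : ℝ) + ((d % p : ℕ) : ℝ) := by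
        exact_mod_cast (Nat.div_add_mod d p).symm
      rw [Int.cast_natCast]
      field_simp
      linarith
    rw [this, hn]

lemma codePt_pos_lt_one {u : List ℕ} (hu : PosWord u) (ω : ℕ → Block) :
    0 < codePt u ω ∧ codePt u ω < 1 :=
  cfPhi_pos_lt_one hu (by linarith [limPt_mem ω]) (by linarith [limPt_mem ω])

lemma codePt_irrational {u : List ℕ} (hu : PosWord u) (ω : ℕ → Block) :
    Irrational (codePt u ω) := by
  rintro ⟨r, hr⟩
  have h0 := (codePt_pos_lt_one hu ω).1
  have hr0 : 0 < r := by rw [← hr] at h0; exact_mod_cast h0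
  have hx : codePt u ω = ((r.num.toNat : ℕ) : ℝ) / (r.den : ℝ) := by
    rw [← hr]
    have h1 : ((r.num.toNat : ℕ) : ℤ) = r.num := Int.toNat_of_nonneg (Rat.num_pos.2 hr0).le
    have h2 : ((r.num.toNat : ℕ) : ℝ) = (r.num : ℝ) := by exact_mod_cast congrArg (Int.cast (R := ℝ)) h1
    rw [h2]
    exact_mod_cast (Rat.num_div_den r).symm
  obtain ⟨n, hn⟩ := exists_gaussMap_iterate_eq_zero r.num.toNat r.den
  rw [← hx, codePt_eq u ω n] at hn
  set l := preWord u ω n with hl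
  have hpos := preWord_pos hu ω n
  rw [← hl, ← List.take_append_drop n l] at hpos
  rw [← List.take_append_drop n l, cfPhi_append] at hn
  have hlen : (l.take n).length = n := by
    rw [List.length_take, min_eq_left (le_length_preWord u ω n)]
  have hm := limPt_mem fun i => ω (i + n)
  have h3 := cfPhi_pos_lt_one hpos.right (by linarith [hm] : 0 < limPt fun i => ω (i + n))
    (by linarith [hm])
  have h4 := gaussMap_iterate_cfPhi hpos.left h3.1 h3.2
  rw [hlen, hn] at h4
  linarith [h3.1]

lemma cfA_codePt {u : List ℕ} (hu : PosWord u) (ω : ℕ → Block) (j : ℕ) {w v : List ℕ} {a : ℕ}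
    (h : (ω j).1 = w ++ a :: v) :
    cfA ((preWord u ω j).length + w.length + 1) (codePt u ω) = a := by
  have hm := limPt_mem fun i => ω (i + (j + 1))
  have hpos := preWord_pos hu ω (j + 1)
  rw [codePt_eq u ω (j + 1)]
  rw [preWord, h, ← List.append_assoc] at hpos ⊢
  have := cfA_cfPhi hpos (by linarith [hm] : 0 < limPt fun i => ω (i + (j + 1))) (by linarith [hm])
  rwa [List.length_append] at this

/-! ### The mass distribution principle for random block sequences -/

/-- The measure on blocks giving mass `c w` to each `w ∈ W`. -/
noncomputable def blockMeasure (W : Finset Block) (c : Block → ℝ) : Measure Block :=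
  ∑ w ∈ W, ENNReal.ofReal (c w) • Measure.dirac w

lemma blockMeasure_apply_finset {W V : Finset Block} {c : Block → ℝ} (hc : ∀ w ∈ W, 0 ≤ c w)
    (hV : V ⊆ W) : blockMeasure W c V = ENNReal.ofReal (∑ w ∈ V, c w) := by
  classical
  rw [ENNReal.ofReal_sum_of_nonneg fun w hw => hc w (hV hw), blockMeasure,
    Measure.finsetSum_apply, ← Finset.sum_subset hV]
  · refine Finset.sum_congr rfl fun w hw => ?_
    rw [Measure.smul_apply, Measure.dirac_apply, Set.indicator_of_mem (by exact_mod_cast hw)]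
    simp
  · intro w _ hw
    rw [Measure.smul_apply, Measure.dirac_apply, Set.indicator_of_notMem (by exact_mod_cast hw)]
    simp

lemma blockMeasure_compl (W : Finset Block) (c : Block → ℝ) :
    blockMeasure W c ((W : Set Block)ᶜ) = 0 := by
  rw [blockMeasure, Measure.finsetSum_apply]
  refine Finset.sum_eq_zero fun w hw => ?_
  rw [Measure.smul_apply, Measure.dirac_apply, Set.indicator_of_notMem (by simpa using hw)]
  simp

lemma isProbabilityMeasure_blockMeasure {W : Finset Block} {c : Block → ℝ}
    (hc : ∀ w ∈ W, 0 ≤ c w) (hsum : ∑ w ∈ W, c w = 1) :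
    IsProbabilityMeasure (blockMeasure W c) := by
  constructor
  rw [← measure_add_measure_compl (W.measurableSet), blockMeasure_compl,
    blockMeasure_apply_finset hc subset_rfl, hsum]
  simp

/-- Blocks are chosen independently, the `j`-th one in `W j` with probabilities `c j`. If the
cylinder masses are at most `g j / q^{2s}` and if every set `V` of at least two `j`-th blocks
contains two blocks that are separated by a distance `δ` with `g j * c j (V) ≤ κ δ^s`, then the law
of the coded point is `s`-Hölder, hence any set containing all coded points has dimension at
least `s`. -/
theorem le_dimH_of_blocks {u : List ℕ} (hu : PosWord u) {s κ : ℝ} (hs : 0 < s)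
    (W : ℕ → Finset Block) (c : ℕ → Block → ℝ) (g : ℕ → ℝ)
    (hc : ∀ j, ∀ w ∈ W j, 0 ≤ c j w) (hsum : ∀ j, ∑ w ∈ W j, c j w = 1)
    (hg : ∀ j, g j ≤ κ)
    (hmass : ∀ ω : ℕ → Block, (∀ j, ω j ∈ W j) → ∀ j,
      (∏ i ∈ Finset.range j, c i (ω i)) * (contQ (preWord u ω j) : ℝ) ^ (2 * s) ≤ g j)
    (hloc : ∀ j, ∀ V ⊆ W j, V.Nontrivial → ∃ w ∈ V, ∃ w' ∈ V, ∃ δ : ℝ, 0 < δ ∧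
      (∀ t t' : ℝ, 1 / 3 ≤ t → t ≤ 1 / 2 → 1 / 3 ≤ t' → t' ≤ 1 / 2 →
        δ ≤ |cfPhi w.1 t - cfPhi w'.1 t'|) ∧ g j * ∑ w ∈ V, c j w ≤ κ * δ ^ s)
    {F : Set ℝ} (hF : ∀ ω : ℕ → Block, (∀ j, ω j ∈ W j) → codePt u ω ∈ F) :
    ENNReal.ofReal s ≤ dimH F := by
  classical
  have hprob : ∀ j, IsProbabilityMeasure (blockMeasure (W j) (c j)) := fun j =>
    isProbabilityMeasure_blockMeasure (hc j) (hsum j)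
  set ν : Measure (ℕ → Block) := Measure.infinitePi fun j => blockMeasure (W j) (c j) with hν
  have hsupp : ∀ᵐ ω ∂ν, ∀ j, ω j ∈ W j := by
    rw [ae_all_iff]
    intro j
    have h1 : ν (Set.pi ({j} : Finset ℕ) fun _ => ((W j : Set Block))ᶜ) = 0 := by
      rw [hν, Measure.infinitePi_pi _ fun _ _ => MeasurableSet.of_discrete]
      simp [blockMeasure_compl]
    refine measure_mono_null (fun ω hω => ?_) h1
    simpa using hω
  -- masses of cylinders with a free choice in `V` at the last place
  have hcyl : ∀ (ω₀ : ℕ → Block), (∀ j, ω₀ j ∈ W j) → ∀ j, ∀ V ⊆ W j,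
      ν {ω | (∀ i < j, ω i = ω₀ i) ∧ ω j ∈ V} ≤
        ENNReal.ofReal (g j * (∑ w ∈ V, c j w) * (contQ (preWord u ω₀ j) : ℝ) ^ (-(2 * s))) := by
    intro ω₀ hω₀ j V hV
    set t : ℕ → Set Block := fun i => if i < j then {ω₀ i} else (V : Set Block) with ht
    have h1 : {ω : ℕ → Block | (∀ i < j, ω i = ω₀ i) ∧ ω j ∈ V} ⊆
        Set.pi (Finset.range (j + 1)) t := by
      rintro ω ⟨h1, h2⟩ i hi
      simp only [Finset.coe_range, Set.mem_Iio] at hi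
      simp only [ht]
      split_ifs with h
      · exact h1 i h
      · have : i = j := by omega
        subst this
        exact_mod_cast h2
    refine (measure_mono h1).trans ?_
    have hprod : ∏ i ∈ Finset.range j, blockMeasure (W i) (c i) (t i) =
        ENNReal.ofReal (∏ i ∈ Finset.range j, c i (ω₀ i)) := by
      rw [ENNReal.ofReal_prod_of_nonneg fun i _ => hc i _ (hω₀ i)]
      refine Finset.prod_congr rfl fun i hi => ?_
      have : t i = (({ω₀ i} : Finset Block) : Set Block) := by
        simp [ht, Finset.mem_range.1 hi]
      rw [this, blockMeasure_apply_finset (hc i) (by simpa using hω₀ i)]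
      simp
    have htj : t j = V := by simp [ht]
    have hq := contQ_pos (preWord_pos hu ω₀ j)
    rw [hν, Measure.infinitePi_pi _ fun _ _ => MeasurableSet.of_discrete, Finset.prod_range_succ,
      hprod, htj, blockMeasure_apply_finset (hc j) hV,
      ← ENNReal.ofReal_mul (Finset.prod_nonneg fun i _ => hc i _ (hω₀ i))]
    apply ENNReal.ofReal_le_ofReal
    have h2 := hmass ω₀ hω₀ j
    have h3 : 0 ≤ ∑ w ∈ V, c j w := Finset.sum_nonneg fun w hw => hc j w (hV hw)
    have h4 : ∏ i ∈ Finset.range j, c i (ω₀ i) ≤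
        g j * (contQ (preWord u ω₀ j) : ℝ) ^ (-(2 * s)) := by
      rw [Real.rpow_neg hq.le, ← div_eq_mul_inv, le_div_iff₀ (by positivity)]
      exact h2
    calc _ ≤ (g j * (contQ (preWord u ω₀ j) : ℝ) ^ (-(2 * s))) * ∑ w ∈ V, c j w := by gcongr
      _ = _ := by ring
  have hWne : ∀ j, ∃ w, w ∈ W j := by
    intro j
    by_contra h
    push Not at h
    have := hsum j
    rw [Finset.eq_empty_of_forall_notMem h] at this
    simp at this
  have hκ : 0 ≤ κ := by
    choose ω hω using hWne
    refine le_trans ?_ ((hmass ω hω 0).trans (hg 0))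
    simp
    positivity
  -- points are null
  have hpoint : ∀ ω₀ : ℕ → Block, (∀ j, ω₀ j ∈ W j) → ν {ω₀} = 0 := by
    intro ω₀ hω₀
    have hlim : Tendsto (fun j : ℕ => ENNReal.ofReal (κ * ((4 : ℝ) ^ (-s)) ^ j)) atTop (𝓝 0) := by
      rw [← ENNReal.ofReal_zero]
      apply ENNReal.tendsto_ofReal
      rw [← mul_zero κ]
      refine (tendsto_pow_atTop_nhds_zero_of_lt_one (by positivity) ?_).const_mul κ
      exact Real.rpow_lt_one_of_one_lt_of_neg (by norm_num) (by linarith)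
    refine le_antisymm (ge_of_tendsto' hlim fun j => ?_) bot_le
    have h1 := hcyl ω₀ hω₀ j (W j) subset_rfl
    have h2 : ({ω₀} : Set (ℕ → Block)) ⊆ {ω | (∀ i < j, ω i = ω₀ i) ∧ ω j ∈ W j} := by
      rintro _ rfl
      exact ⟨fun _ _ => rfl, hω₀ j⟩
    refine (measure_mono h2).trans (h1.trans (ENNReal.ofReal_le_ofReal ?_))
    rw [hsum, mul_one]
    have hq : (2 : ℝ) ^ j ≤ contQ (preWord u ω₀ j) := by
      exact_mod_cast two_pow_le_contQ_preWord hu ω₀ j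
    have h3 : (contQ (preWord u ω₀ j) : ℝ) ^ (-(2 * s)) ≤ ((2 : ℝ) ^ j) ^ (-(2 * s)) :=
      Real.rpow_le_rpow_of_nonpos (by positivity) hq (by linarith)
    have h4 : ((2 : ℝ) ^ j) ^ (-(2 * s)) = ((4 : ℝ) ^ (-s)) ^ j := by
      rw [show (4 : ℝ) = (2 : ℝ) ^ (2 : ℝ) by norm_num, ← Real.rpow_mul (by norm_num),
        ← Real.rpow_natCast, ← Real.rpow_natCast, ← Real.rpow_mul (by norm_num),
        ← Real.rpow_mul (by norm_num)]
      congr 1; ring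
    rw [← h4]
    have hgj := hg j
    calc _ ≤ κ * (contQ (preWord u ω₀ j) : ℝ) ^ (-(2 * s)) := by gcongr
      _ ≤ _ := by gcongr
  -- the Hölder bound
  have hholder : ∀ U : Set ℝ, ν (codePt u ⁻¹' U) ≤
      ENNReal.ofReal (κ * 4 ^ s) * Metric.ediam U ^ s := by
    intro U
    set Ω : Set (ℕ → Block) := {ω | codePt u ω ∈ U ∧ ∀ j, ω j ∈ W j} with hΩ
    have hle : ν (codePt u ⁻¹' U) ≤ ν Ω := by
      refine measure_mono_ae ?_
      filter_upwards [hsupp] with ω hω hωU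
      exact ⟨hωU, hω⟩
    refine hle.trans ?_
    by_cases hex : ∃ j, ∃ ω ∈ Ω, ∃ ω' ∈ Ω, ω j ≠ ω' j
    · set j := Nat.find hex with hj
      obtain ⟨ω₁, hω₁, ω₂, hω₂, hne⟩ := Nat.find_spec hex
      have hagree : ∀ ω ∈ Ω, ∀ i < j, ω i = ω₁ i := by
        intro ω hω i hi
        by_contra hcon
        exact Nat.find_min hex hi ⟨ω, hω, ω₁, hω₁, hcon⟩
      set V : Finset Block := (W j).filter fun w => ∃ ω ∈ Ω, ω j = w with hV
      have hVW : V ⊆ W j := Finset.filter_subset _ _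
      have hmem : ∀ ω ∈ Ω, ω j ∈ V := fun ω hω =>
        Finset.mem_filter.2 ⟨hω.2 j, ω, hω, rfl⟩
      obtain ⟨w, hw, w', hw', δ, hδ, hsep, hmassV⟩ := hloc j V hVW
        ⟨ω₁ j, by exact_mod_cast hmem ω₁ hω₁, ω₂ j, by exact_mod_cast hmem ω₂ hω₂, hne⟩
      obtain ⟨ω, hω, rfl⟩ := (Finset.mem_filter.1 hw).2
      obtain ⟨ω', hω', rfl⟩ := (Finset.mem_filter.1 hw').2
      have hsub : Ω ⊆ {ω | (∀ i < j, ω i = ω₁ i) ∧ ω j ∈ V} := fun ω hω =>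
        ⟨hagree ω hω, hmem ω hω⟩
      refine (measure_mono hsub).trans ((hcyl ω₁ hω₁.2 j V hVW).trans ?_)
      set q : ℝ := (contQ (preWord u ω₁ j) : ℝ) with hq
      have hq0 : 0 < q := contQ_pos (preWord_pos hu ω₁ j)
      -- the two coded points are at distance at least `δ / (4 q²)`
      have hdist : δ / (4 * q ^ 2) ≤ |codePt u ω - codePt u ω'| := by
        rw [codePt_eq u ω j, codePt_eq u ω' j, preWord_congr u (hagree ω hω),
          preWord_congr u (hagree ω' hω'), limPt_eq fun i => ω (i + j),
          limPt_eq fun i => ω' (i + j)]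
        simp only [zero_add]
        have hm := limPt_mem fun i => ω (i + 1 + j)
        have hm' := limPt_mem fun i => ω' (i + 1 + j)
        have hb := (ω j).cfPhi_mem (by linarith [hm.1] : (0 : ℝ) ≤ limPt fun i => ω (i + 1 + j))
          (by linarith [hm.2])
        have hb' := (ω' j).cfPhi_mem
          (by linarith [hm'.1] : (0 : ℝ) ≤ limPt fun i => ω' (i + 1 + j)) (by linarith [hm'.2])
        refine le_trans ?_ (cfPhi_dist_ge (preWord_pos hu ω₁ j) (by linarith [hb.1])
          (by linarith [hb'.1]) (by linarith [hb.2]) (by linarith [hb'.2]))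
        have := hsep _ _ hm.1 hm.2 hm'.1 hm'.2
        gcongr
      have hediam : ENNReal.ofReal (δ / (4 * q ^ 2)) ≤ Metric.ediam U := by
        refine le_trans ?_ (Metric.edist_le_ediam_of_mem hω.1 hω'.1)
        rw [edist_dist, Real.dist_eq]
        exact ENNReal.ofReal_le_ofReal hdist
      refine le_trans ?_ (mul_le_mul_right (ENNReal.rpow_le_rpow hediam hs.le) _)
      rw [ENNReal.ofReal_rpow_of_nonneg (by positivity) hs.le, ← ENNReal.ofReal_mul (by positivity)]
      apply ENNReal.ofReal_le_ofReal
      have h5 : (δ / (4 * q ^ 2)) ^ s = δ ^ s / 4 ^ s * q ^ (-(2 * s)) := by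
        rw [Real.div_rpow hδ.le (by positivity), Real.mul_rpow (by norm_num) (by positivity),
          ← Real.rpow_natCast, ← Real.rpow_mul hq0.le, Real.rpow_neg hq0.le]
        push_cast
        field_simp
      rw [h5]
      calc _ ≤ (κ * δ ^ s) * q ^ (-(2 * s)) := by gcongr
        _ = _ := by field_simp
    · push Not at hex
      rcases Ω.eq_empty_or_nonempty with h0 | ⟨ω₀, hω₀⟩
      · rw [h0]; simp
      · have : Ω ⊆ {ω₀} := fun ω hω => funext fun j => hex j ω hω ω₀ hω₀
        exact (measure_mono this).trans ((hpoint ω₀ hω₀.2).le.trans bot_le)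
  set L : ℝ := κ * 4 ^ s + 1 with hL
  have hL0 : 0 < L := by positivity
  set μ : Measure ℝ := (ENNReal.ofReal L)⁻¹ • ν.map (codePt u) with hμ
  have hLne : ENNReal.ofReal L ≠ 0 := by simpa using hL0
  have hμle : μ ≤ μH[s] := by
    refine Measure.le_hausdorffMeasure s μ 1 one_pos fun U _ => ?_
    refine (measure_mono subset_closure).trans ?_
    rw [hμ, Measure.smul_apply, Measure.map_apply (measurable_codePt u) isClosed_closure.measurableSet,
      ← Metric.ediam_closure U, smul_eq_mul, ENNReal.inv_mul_le_iff hLne ENNReal.ofReal_ne_top]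
    refine (hholder _).trans ?_
    gcongr
    rw [hL]; linarith
  have hpos : μH[s] F ≠ 0 := by
    intro h0
    have h1 : μ F = 0 := le_antisymm ((hμle F).trans h0.le) bot_le
    have h2 : ν (codePt u ⁻¹' F) = 0 := by
      rw [hμ, Measure.smul_apply, smul_eq_mul, mul_eq_zero] at h1
      rcases h1 with h1 | h1
      · simp at h1
      · exact le_antisymm ((Measure.le_map_apply (measurable_codePt u).aemeasurable F).trans h1.le)
          bot_le
    have h3 : ∀ᵐ ω ∂ν, False := by
      filter_upwards [hsupp, measure_eq_zero_iff_ae_notMem.1 h2] with ω hω hω'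
      exact hω' (hF ω hω)
    simp [ae_iff] at h3
  have := le_dimH_of_hausdorffMeasure_ne_zero (d := s.toNNReal) (s := F)
    (by rwa [Real.coe_toNNReal s hs.le])
  exact this

/-! ### Separation of blocks -/

lemma cfPhi_inj {w w' : List ℕ} (hw : PosWord w) (hw' : PosWord w') (hlen : w.length = w'.length)
    {t t' : ℝ} (ht : 0 < t) (ht1 : t < 1) (ht' : 0 < t') (ht1' : t' < 1)
    (h : cfPhi w t = cfPhi w' t') : w = w' := by
  induction w generalizing w' with
  | nil => exact (List.length_eq_zero_iff.1 hlen.symm).symm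
  | cons a w ih =>
    cases w' with
    | nil => simp at hlen
    | cons a' w' =>
      obtain ⟨ha, hw⟩ := posWord_cons.1 hw
      obtain ⟨ha', hw'⟩ := posWord_cons.1 hw'
      obtain ⟨h1, h2⟩ := cfPhi_pos_lt_one hw ht ht1
      obtain ⟨h3, h4⟩ := cfPhi_pos_lt_one hw' ht' ht1'
      simp only [cfPhi] at h
      have e1 := gaussMap_inv_add ha h1 h2
      have e2 := gaussMap_inv_add ha' h3 h4
      have haa : a = a' := by rw [← e1.2, ← e2.2, h]
      have hww : cfPhi w t = cfPhi w' t' := by rw [← e1.1, ← e2.1, h]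
      rw [haa, ih hw hw' (by simpa using hlen) hww]

lemma continuousOn_cfPhi {w : List ℕ} (hw : PosWord w) : ContinuousOn (cfPhi w) (Set.Ici 0) := by
  induction w with
  | nil => exact continuousOn_id
  | cons a w ih =>
    obtain ⟨ha, hw⟩ := posWord_cons.1 hw
    refine continuousOn_const.div (continuousOn_const.add (ih hw)) fun t ht => ?_
    have h1 := cfPhi_nonneg w (Set.mem_Ici.1 ht)
    have h2 : (1 : ℝ) ≤ a := by exact_mod_cast ha
    linarith

lemma exists_sep_pair {w w' : List ℕ} (hw : PosWord w) (hw' : PosWord w')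
    (hlen : w.length = w'.length) (hne : w ≠ w') : ∃ δ : ℝ, 0 < δ ∧
      ∀ t t' : ℝ, 1 / 3 ≤ t → t ≤ 1 / 2 → 1 / 3 ≤ t' → t' ≤ 1 / 2 →
        δ ≤ |cfPhi w t - cfPhi w' t'| := by
  have hK : IsCompact (Set.Icc (1 / 3 : ℝ) (1 / 2) ×ˢ Set.Icc (1 / 3 : ℝ) (1 / 2)) :=
    isCompact_Icc.prod isCompact_Icc
  have hcont : ContinuousOn (fun p : ℝ × ℝ => |cfPhi w p.1 - cfPhi w' p.2|)
      (Set.Icc (1 / 3 : ℝ) (1 / 2) ×ˢ Set.Icc (1 / 3 : ℝ) (1 / 2)) := by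
    refine ContinuousOn.abs (ContinuousOn.sub ?_ ?_)
    · refine (continuousOn_cfPhi hw).comp continuousOn_fst fun p hp => ?_
      have := hp.1.1
      exact Set.mem_Ici.2 (by linarith)
    · refine (continuousOn_cfPhi hw').comp continuousOn_snd fun p hp => ?_
      have := hp.2.1
      exact Set.mem_Ici.2 (by linarith)
  obtain ⟨p, hp, hmin⟩ := hK.exists_isMinOn
    ⟨((1 / 3 : ℝ), (1 / 3 : ℝ)), by constructor <;> constructor <;> norm_num⟩ hcont
  refine ⟨|cfPhi w p.1 - cfPhi w' p.2|, ?_, ?_⟩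
  · rw [abs_pos, sub_ne_zero]
    intro h
    have h1 := hp.1.1; have h2 := hp.1.2; have h3 := hp.2.1; have h4 := hp.2.2
    exact hne (cfPhi_inj hw hw' hlen (by linarith) (by linarith) (by linarith) (by linarith) h)
  · intro t t' h1 h2 h3 h4
    exact hmin (show (t, t') ∈ _ from ⟨⟨h1, h2⟩, ⟨h3, h4⟩⟩)

/-- Finitely many blocks of the same length have images of `[1/3, 1/2]` at positive distance. -/
lemma exists_sep (W : Finset Block) {M : ℕ} (hM : ∀ w ∈ W, w.1.length = M) : ∃ δ : ℝ, 0 < δ ∧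
    ∀ w ∈ W, ∀ w' ∈ W, w ≠ w' →
      ∀ t t' : ℝ, 1 / 3 ≤ t → t ≤ 1 / 2 → 1 / 3 ≤ t' → t' ≤ 1 / 2 →
        δ ≤ |cfPhi w.1 t - cfPhi w'.1 t'| := by
  have h : ∀ p : Block × Block, ∃ δ : ℝ, 0 < δ ∧ (p.1 ∈ W → p.2 ∈ W → p.1 ≠ p.2 →
      ∀ t t' : ℝ, 1 / 3 ≤ t → t ≤ 1 / 2 → 1 / 3 ≤ t' → t' ≤ 1 / 2 →
        δ ≤ |cfPhi p.1.1 t - cfPhi p.2.1 t'|) := by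
    intro p
    by_cases hp : p.1 ∈ W ∧ p.2 ∈ W ∧ p.1 ≠ p.2
    · obtain ⟨δ, h0, h1⟩ := exists_sep_pair p.1.2.1 p.2.2.1
        ((hM _ hp.1).trans (hM _ hp.2.1).symm) (fun h => hp.2.2 (Subtype.ext h))
      exact ⟨δ, h0, fun _ _ _ => h1⟩
    · exact ⟨1, one_pos, fun h1 h2 h3 => absurd ⟨h1, h2, h3⟩ hp⟩
  choose f hf0 hf using h
  rcases (W ×ˢ W).eq_empty_or_nonempty with h0 | hne
  · refine ⟨1, one_pos, fun w hw w' hw' => ?_⟩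
    have : (w, w') ∈ W ×ˢ W := Finset.mk_mem_product hw hw'
    rw [h0] at this
    simp at this
  · refine ⟨(W ×ˢ W).inf' hne f, (Finset.lt_inf'_iff _).2 fun p _ => hf0 p, ?_⟩
    intro w hw w' hw' hww t t' h1 h2 h3 h4
    exact (Finset.inf'_le f (Finset.mk_mem_product hw hw')).trans
      (hf (w, w') hw hw' hww t t' h1 h2 h3 h4)

lemma inv_dist_ge {x y K : ℝ} (hx : 0 < x) (hy : 0 < y) (hxK : x ≤ K) (hyK : y ≤ K) :
    |x - y| / K ^ 2 ≤ |1 / x - 1 / y| := by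
  have : 1 / x - 1 / y = (y - x) / (x * y) := by field_simp
  rw [this, abs_div, abs_sub_comm y x, abs_of_pos (mul_pos hx hy)]
  have h2 : x * y ≤ K ^ 2 := by nlinarith
  gcongr

/-- The block `2, a+1, b+1, 2, …, 2` with `m` trailing twos. -/
def spBlock (m : ℕ) (p : ℕ × ℕ) : Block :=
  ⟨2 :: (p.1 + 1) :: (p.2 + 1) :: List.replicate m 2, by
    refine ⟨?_, _, rfl⟩
    intro a ha
    simp only [List.mem_cons, List.mem_replicate] at ha
    omega⟩

lemma spBlock_injective (m : ℕ) : Function.Injective (spBlock m) := by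
  rintro ⟨a, b⟩ ⟨a', b'⟩ h
  have := congrArg Subtype.val h
  simp only [spBlock, List.cons.injEq] at this
  ext <;> simp <;> omega

lemma cfPhi_replicate_two (m : ℕ) {t : ℝ} (h1 : 1 / 3 ≤ t) (h2 : t ≤ 1 / 2) :
    1 / 3 ≤ cfPhi (List.replicate m 2) t ∧ cfPhi (List.replicate m 2) t ≤ 1 / 2 := by
  induction m with
  | zero => exact ⟨h1, h2⟩
  | succ m ih =>
    rw [List.replicate_succ]
    simp only [cfPhi]
    push_cast
    constructor
    · apply one_div_le_one_div_of_le <;> linarith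
    · apply one_div_le_one_div_of_le <;> linarith

lemma spBlock_sep_fst {m a b a' b' : ℕ} {α : ℝ} (hα : 1 ≤ α) (haa : a < a')
    (ha : (a' : ℝ) + 1 ≤ 2 * α)
    {t t' : ℝ} (h1 : 1 / 3 ≤ t) (h2 : t ≤ 1 / 2) (h3 : 1 / 3 ≤ t') (h4 : t' ≤ 1 / 2) :
    ((a' : ℝ) - a) / (324 * α ^ 2) ≤
      |cfPhi (spBlock m (a, b)).1 t - cfPhi (spBlock m (a', b')).1 t'| := by
  obtain ⟨k1, k2⟩ := cfPhi_replicate_two m h1 h2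
  obtain ⟨k3, k4⟩ := cfPhi_replicate_two m h3 h4
  simp only [spBlock, cfPhi]
  push_cast
  set τ := cfPhi (List.replicate m 2) t
  set τ' := cfPhi (List.replicate m 2) t'
  have hz : ∀ (b : ℕ) (τ : ℝ), 1 / 3 ≤ τ → 0 < 1 / ((b : ℝ) + 1 + τ) ∧ 1 / ((b : ℝ) + 1 + τ) ≤ 3 / 4 := by
    intro b τ hτ
    have hb : (0 : ℝ) ≤ b := Nat.cast_nonneg b
    refine ⟨by positivity, ?_⟩
    rw [div_le_div_iff₀ (by linarith) (by norm_num)]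
    linarith
  obtain ⟨z0, z1⟩ := hz b τ k1
  obtain ⟨z0', z1'⟩ := hz b' τ' k3
  set z := 1 / ((b : ℝ) + 1 + τ)
  set z' := 1 / ((b' : ℝ) + 1 + τ')
  have hlt : (a : ℝ) + 1 ≤ a' := by exact_mod_cast haa
  have ha0 : (0 : ℝ) ≤ a := Nat.cast_nonneg a
  have hy : ∀ x : ℝ, 1 ≤ x → 0 < 1 / x ∧ 1 / x ≤ 1 := fun x hx =>
    ⟨by positivity, by rw [div_le_one (by linarith)]; exact hx⟩
  obtain ⟨y0, y1⟩ := hy ((a : ℝ) + 1 + z) (by linarith)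
  obtain ⟨y0', y1'⟩ := hy ((a' : ℝ) + 1 + z') (by linarith)
  have e1 := inv_dist_ge (x := 2 + 1 / ((a : ℝ) + 1 + z)) (y := 2 + 1 / ((a' : ℝ) + 1 + z')) (K := 3)
    (by linarith) (by linarith) (by linarith) (by linarith)
  have e2 := inv_dist_ge (x := (a : ℝ) + 1 + z) (y := (a' : ℝ) + 1 + z') (K := 3 * α)
    (by linarith) (by linarith) (by linarith) (by linarith)
  rw [add_sub_add_left_eq_sub] at e1
  refine le_trans ?_ e1
  have e3 : ((a' : ℝ) - a) / 4 ≤ |(a : ℝ) + 1 + z - (a' + 1 + z')| := by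
    rw [abs_sub_comm]
    exact le_trans (by linarith) (le_abs_self _)
  calc ((a' : ℝ) - a) / (324 * α ^ 2) = ((a' - a) / 4 / (3 * α) ^ 2) / 3 ^ 2 := by
        field_simp; ring
    _ ≤ _ := by
        have := (div_le_div_of_nonneg_right e3 (by positivity : (0 : ℝ) ≤ (3 * α) ^ 2)).trans e2
        gcongr

lemma spBlock_sep_snd {m a b b' : ℕ} {α β : ℝ} (hα : 1 ≤ α) (hβ : 1 ≤ β) (hbb : b < b')
    (ha : (a : ℝ) + 1 ≤ 2 * α) (hb : (b' : ℝ) + 1 ≤ 2 * β)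
    {t t' : ℝ} (h1 : 1 / 3 ≤ t) (h2 : t ≤ 1 / 2) (h3 : 1 / 3 ≤ t') (h4 : t' ≤ 1 / 2) :
    ((b' : ℝ) - b) / (2916 * (α ^ 2 * β ^ 2)) ≤
      |cfPhi (spBlock m (a, b)).1 t - cfPhi (spBlock m (a, b')).1 t'| := by
  obtain ⟨k1, k2⟩ := cfPhi_replicate_two m h1 h2
  obtain ⟨k3, k4⟩ := cfPhi_replicate_two m h3 h4
  simp only [spBlock, cfPhi]
  push_cast
  set τ := cfPhi (List.replicate m 2) t
  set τ' := cfPhi (List.replicate m 2) t'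
  have hlt : (b : ℝ) + 1 ≤ b' := by exact_mod_cast hbb
  have hb0 : (0 : ℝ) ≤ b := Nat.cast_nonneg b
  have ha0 : (0 : ℝ) ≤ a := Nat.cast_nonneg a
  have hy : ∀ x : ℝ, 1 ≤ x → 0 < 1 / x ∧ 1 / x ≤ 1 := fun x hx =>
    ⟨by positivity, by rw [div_le_one (by linarith)]; exact hx⟩
  have e3 := inv_dist_ge (x := (b : ℝ) + 1 + τ) (y := (b' : ℝ) + 1 + τ') (K := 3 * β)
    (by linarith) (by linarith) (by linarith) (by linarith)
  obtain ⟨z0, z1⟩ := hy ((b : ℝ) + 1 + τ) (by linarith)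
  obtain ⟨z0', z1'⟩ := hy ((b' : ℝ) + 1 + τ') (by linarith)
  set z := 1 / ((b : ℝ) + 1 + τ)
  set z' := 1 / ((b' : ℝ) + 1 + τ')
  obtain ⟨y0, y1⟩ := hy ((a : ℝ) + 1 + z) (by linarith)
  obtain ⟨y0', y1'⟩ := hy ((a : ℝ) + 1 + z') (by linarith)
  have e1 := inv_dist_ge (x := 2 + 1 / ((a : ℝ) + 1 + z)) (y := 2 + 1 / ((a : ℝ) + 1 + z')) (K := 3)
    (by linarith) (by linarith) (by linarith) (by linarith)
  have e2 := inv_dist_ge (x := (a : ℝ) + 1 + z) (y := (a : ℝ) + 1 + z') (K := 3 * α)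
    (by linarith) (by linarith) (by linarith) (by linarith)
  rw [add_sub_add_left_eq_sub] at e1 e2
  refine le_trans ?_ e1
  have e4 : ((b' : ℝ) - b) / 4 ≤ |(b : ℝ) + 1 + τ - (b' + 1 + τ')| := by
    rw [abs_sub_comm]
    exact le_trans (by linarith) (le_abs_self _)
  calc ((b' : ℝ) - b) / (2916 * (α ^ 2 * β ^ 2)) =
        ((b' - b) / 4 / (3 * β) ^ 2) / (3 * α) ^ 2 / 3 ^ 2 := by
        field_simp; ring
    _ ≤ _ := by
        have h5 := (div_le_div_of_nonneg_right e4 (by positivity : (0 : ℝ) ≤ (3 * β) ^ 2)).trans e3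
        have h6 := (div_le_div_of_nonneg_right h5 (by positivity : (0 : ℝ) ≤ (3 * α) ^ 2)).trans e2
        gcongr

/-! ### A sparse choice of special places -/

lemma exists_sparse {G : Set ℕ} (hG : G.Infinite) (H : ℕ → ℝ) (h0 : ℝ) :
    ∃ S ⊆ G, S.Infinite ∧ (∀ j ∈ S, h0 ≤ 2 ^ j) ∧
      ∀ i ∈ S, ∀ j ∈ S, i < j → H i ≤ 2 ^ (j - i - 1) := by
  have hnext : ∀ i, ∃ k ∈ G, i < k ∧ H i ≤ 2 ^ (k - i - 1) := by
    intro i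
    obtain ⟨N, hN⟩ := pow_unbounded_of_one_lt (H i) (one_lt_two : (1 : ℝ) < 2)
    obtain ⟨k, hk, hk'⟩ := hG.exists_gt (N + i + 1)
    refine ⟨k, hk, by omega, hN.le.trans (pow_le_pow_right₀ one_le_two (by omega))⟩
  obtain ⟨e0, he0, he0'⟩ : ∃ k ∈ G, h0 ≤ 2 ^ k := by
    obtain ⟨N, hN⟩ := pow_unbounded_of_one_lt h0 (one_lt_two : (1 : ℝ) < 2)
    obtain ⟨k, hk, hk'⟩ := hG.exists_gt N
    exact ⟨k, hk, hN.le.trans (pow_le_pow_right₀ one_le_two hk'.le)⟩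
  choose nxt hn1 hn2 hn3 using hnext
  set e : ℕ → ℕ := fun k => nxt^[k] e0 with he
  have hes : ∀ k, e (k + 1) = nxt (e k) := fun k => Function.iterate_succ_apply' _ _ _
  have hmono : StrictMono e := strictMono_nat_of_lt_succ fun k => by rw [hes]; exact hn2 _
  refine ⟨Set.range e, ?_, Set.infinite_range_of_injective hmono.injective, ?_, ?_⟩
  · rintro _ ⟨k, rfl⟩
    cases k with
    | zero => exact he0
    | succ k => rw [hes]; exact hn1 _
  · rintro _ ⟨k, rfl⟩
    exact he0'.trans (pow_le_pow_right₀ one_le_two (hmono.monotone (Nat.zero_le k)))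
  · rintro _ ⟨k, rfl⟩ _ ⟨l, rfl⟩ hkl
    have h1 : k + 1 ≤ l := hmono.lt_iff_lt.1 hkl
    have h2 : nxt (e k) ≤ e l := by rw [← hes]; exact hmono.monotone h1
    exact (hn3 (e k)).trans (pow_le_pow_right₀ one_le_two (by omega))

/-- A quantity halved at ordinary steps and multiplied by `H j` at special steps is at most `1`
at every special step, when the special steps are sparse enough. -/
lemma le_one_of_sparse {S : Set ℕ} {H h : ℕ → ℝ} (hH : ∀ j, 0 ≤ H j)
    (hS0 : ∀ j ∈ S, h 0 ≤ 2 ^ j) (hS : ∀ i ∈ S, ∀ j ∈ S, i < j → H i ≤ 2 ^ (j - i - 1))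
    (hreg : ∀ j, j ∉ S → h (j + 1) = h j / 2) (hspec : ∀ j ∈ S, h (j + 1) = h j * H j) :
    ∀ j ∈ S, h j ≤ 1 := by
  have key : ∀ j, h j ≤ h 0 / 2 ^ j ∨ ∃ i ∈ S, i < j ∧ h j ≤ H i / 2 ^ (j - i - 1) := by
    have hone : ∀ j ∈ S, (h j ≤ h 0 / 2 ^ j ∨ ∃ i ∈ S, i < j ∧ h j ≤ H i / 2 ^ (j - i - 1)) →
        h j ≤ 1 := by
      rintro j hj (h1 | ⟨i, hi, hij, h1⟩)
      · exact h1.trans ((div_le_one (by positivity)).2 (hS0 j hj))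
      · exact h1.trans ((div_le_one (by positivity)).2 (hS i hi j hj hij))
    intro j
    induction j with
    | zero => left; simp
    | succ j ih =>
      by_cases hj : j ∈ S
      · right
        refine ⟨j, hj, by omega, ?_⟩
        rw [hspec j hj]
        have := hone j hj ih
        have h2 := hH j
        have e : j + 1 - j - 1 = 0 := by omega
        rw [e, pow_zero, div_one]
        nlinarith
      · rw [hreg j hj]
        rcases ih with h1 | ⟨i, hi, hij, h1⟩
        · left
          rw [pow_succ, ← div_div]
          linarith
        · right
          refine ⟨i, hi, by omega, ?_⟩
          have e : j + 1 - i - 1 = (j - i - 1) + 1 := by omega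
          rw [e, pow_succ, ← div_div]
          linarith
  intro j hj
  rcases key j with h1 | ⟨i, hi, hij, h1⟩
  · exact h1.trans ((div_le_one (by positivity)).2 (hS0 j hj))
  · exact h1.trans ((div_le_one (by positivity)).2 (hS i hi j hj hij))

/-! ### Mass of sets of special blocks -/

lemma rpow_neg_le_two_mul {s X α : ℝ} (hs0 : 0 < s) (hs1 : s < 1) (hX : 1 ≤ X) (hα : 0 < α)
    (hα2 : α ≤ 2 * X) : X ^ (-s) ≤ 2 * α ^ (-s) := by
  have h1 : (2 * X) ^ (-s) ≤ α ^ (-s) := Real.rpow_le_rpow_of_nonpos hα hα2 (by linarith)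
  rw [Real.mul_rpow (by norm_num) (by linarith)] at h1
  have h2 : (1 / 2 : ℝ) ≤ 2 ^ (-s) := by
    rw [show (1 / 2 : ℝ) = 2 ^ (-1 : ℝ) by rw [Real.rpow_neg_one]; norm_num]
    exact Real.rpow_le_rpow_of_exponent_le (by norm_num) (by linarith)
  have h3 : 0 ≤ X ^ (-s) := by positivity
  nlinarith

lemma rpow_le_mul_of_ratio {e K x y : ℝ} (he : -1 ≤ e) (he1 : e ≤ 1) (hx : 0 < x) (hxy : x ≤ y)
    (hyK : y ≤ K * x) : y ^ e ≤ K * x ^ e ∧ x ^ e ≤ K * y ^ e := by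
  have hy : 0 < y := hx.trans_le hxy
  set r := y / x with hr
  have hr1 : 1 ≤ r := (one_le_div hx).2 hxy
  have hrK : r ≤ K := (div_le_iff₀ hx).2 hyK
  have hyr : y = r * x := by rw [hr]; field_simp
  have h1 : r ^ e ≤ K := by
    refine le_trans ?_ hrK
    conv_rhs => rw [← Real.rpow_one r]
    exact Real.rpow_le_rpow_of_exponent_le hr1 he1
  have h2 : 1 ≤ K * r ^ e := by
    have h3 : r ^ (-1 : ℝ) ≤ r ^ e := Real.rpow_le_rpow_of_exponent_le hr1 he
    rw [Real.rpow_neg_one] at h3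
    have h4 : r * r⁻¹ = 1 := mul_inv_cancel₀ (by linarith)
    have h5 : 0 < r⁻¹ := by positivity
    calc (1 : ℝ) = r * r⁻¹ := h4.symm
      _ ≤ K * r ^ e := by gcongr; linarith
  rw [hyr, Real.mul_rpow (by linarith) hx.le]
  have hxe : 0 ≤ x ^ e := by positivity
  constructor
  · gcongr
  · nlinarith

lemma const_rpow_neg {s K : ℝ} (hs1 : s < 1) (hK : 1 ≤ K) : 1 / K ≤ K ^ (-s) := by
  rw [one_div, ← Real.rpow_neg_one]
  exact Real.rpow_le_rpow_of_exponent_le hK (by linarith)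

lemma le_rpow_of_le_one {s r : ℝ} (hs1 : s < 1) (hr0 : 0 < r) (hr1 : r ≤ 1) : r ≤ r ^ s := by
  conv_lhs => rw [← Real.rpow_one r]
  exact Real.rpow_le_rpow_of_exponent_ge hr0 hr1 hs1.le

lemma special_num_fst {s X g α d : ℝ} (hs0 : 0 < s) (hs1 : s < 1) (hX : 1 ≤ X)
    (hα : X ≤ α) (hα2 : α ≤ 2 * X) (hg1 : g ≤ X ^ (-s)) (hd : 0 < d) (hdα : d ≤ α) :
    g * (2 * (d / α)) ≤ 30000 * (d / (324 * α ^ 2)) ^ s := by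
  have hα0 : 0 < α := by linarith
  set r := d / α with hr
  have hr0 : 0 < r := by positivity
  have hr1 : r ≤ 1 := (div_le_one hα0).2 hdα
  have e : (d / (324 * α ^ 2)) ^ s = r ^ s * (324 ^ (-s) * α ^ (-s)) := by
    have : d / (324 * α ^ 2) = r * (324⁻¹ * α⁻¹) := by rw [hr]; field_simp
    rw [this, Real.mul_rpow hr0.le (by positivity), Real.mul_rpow (by norm_num) (by positivity),
      Real.inv_rpow (by norm_num), Real.inv_rpow hα0.le, Real.rpow_neg (by norm_num),
      Real.rpow_neg hα0.le]
  rw [e]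
  have h1 := rpow_neg_le_two_mul hs0 hs1 hX hα0 hα2
  have h2 := const_rpow_neg (K := 324) hs1 (by norm_num)
  have h3 := le_rpow_of_le_one hs1 hr0 hr1
  have h4 : 0 < α ^ (-s) := by positivity
  have h5 : 0 < r ^ s := by positivity
  calc g * (2 * r) ≤ (2 * α ^ (-s)) * (2 * r ^ s) := by
        gcongr
        exact hg1.trans h1
    _ ≤ 30000 * (r ^ s * (1 / 324 * α ^ (-s))) := by
        have : 0 < α ^ (-s) * r ^ s := by positivity
        nlinarith
    _ ≤ _ := by gcongr

lemma special_num_snd {s X Y g α β d : ℝ} (hs0 : 0 < s) (hs1 : s < 1) (hX : 1 ≤ X) (hY : 1 ≤ Y)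
    (hα : X ≤ α) (hα2 : α ≤ 2 * X) (hβ : Y ≤ β) (hβ2 : β ≤ 2 * Y)
    (hg2 : g ≤ X ^ (1 - 2 * s) * Y ^ (-s)) (hd : 0 < d) (hdβ : d ≤ β) :
    g * (2 * (d / (α * β))) ≤ 30000 * (d / (2916 * (α ^ 2 * β ^ 2))) ^ s := by
  have hα0 : 0 < α := by linarith
  have hβ0 : 0 < β := by linarith
  set r := d / β with hr
  have hr0 : 0 < r := by positivity
  have hr1 : r ≤ 1 := (div_le_one hβ0).2 hdβ
  have e : (d / (2916 * (α ^ 2 * β ^ 2))) ^ s =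
      r ^ s * (2916 ^ (-s) * (α ^ (-(2 * s)) * β ^ (-s))) := by
    have : d / (2916 * (α ^ 2 * β ^ 2)) = r * (2916⁻¹ * ((α ^ 2)⁻¹ * β⁻¹)) := by rw [hr]; field_simp
    rw [this, Real.mul_rpow hr0.le (by positivity), Real.mul_rpow (by norm_num) (by positivity),
      Real.mul_rpow (by positivity) (by positivity),
      Real.inv_rpow (by norm_num), Real.inv_rpow (by positivity), Real.inv_rpow hβ0.le,
      Real.rpow_neg (by norm_num), Real.rpow_neg hα0.le, Real.rpow_neg hβ0.le,
      ← Real.rpow_natCast, ← Real.rpow_mul hα0.le]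
    push_cast
    rfl
  rw [e]
  have h1 := rpow_neg_le_two_mul hs0 hs1 hY hβ0 hβ2
  have h2 := const_rpow_neg (K := 2916) hs1 (by norm_num)
  have h3 := le_rpow_of_le_one hs1 hr0 hr1
  have h6 := (rpow_le_mul_of_ratio (e := 1 - 2 * s) (K := 2) (by linarith) (by linarith)
    (by linarith) hα hα2).2
  have h7 : α ^ (1 - 2 * s) = α * α ^ (-(2 * s)) := by
    rw [sub_eq_add_neg, Real.rpow_add hα0, Real.rpow_one]
  have hdr : d / (α * β) = r / α := by rw [hr]; field_simp
  rw [hdr]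
  have hp1 : 0 < r ^ s * (α ^ (-(2 * s)) * β ^ (-s)) := by positivity
  calc g * (2 * (r / α)) ≤ ((2 * α ^ (1 - 2 * s)) * (2 * β ^ (-s))) * (2 * (r ^ s / α)) := by
        gcongr
        refine hg2.trans ?_
        gcongr
    _ = 8 * (r ^ s * (α ^ (-(2 * s)) * β ^ (-s))) := by rw [h7]; field_simp; ring
    _ ≤ 30000 * (r ^ s * (1 / 2916 * (α ^ (-(2 * s)) * β ^ (-s)))) := by nlinarith
    _ ≤ _ := by gcongr

/-- The local condition of `le_dimH_of_blocks` for special blocks. If the pairs in `V` have different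
first letters, the extreme first letters are used and `g ≤ X ^ (-s)` gives the estimate; otherwise
the extreme second letters are used together with `g ≤ X ^ (1-2s) Y ^ (-s)`. -/
lemma spBlock_local {s X Y g : ℝ} {m α β : ℕ} (hs0 : 0 < s) (hs1 : s < 1) (hX : 1 ≤ X)
    (hY : 1 ≤ Y) (hα : X ≤ α) (hα2 : (α : ℝ) ≤ 2 * X) (hβ : Y ≤ β) (hβ2 : (β : ℝ) ≤ 2 * Y)
    (hg0 : 0 ≤ g) (hg1 : g ≤ X ^ (-s)) (hg2 : g ≤ X ^ (1 - 2 * s) * Y ^ (-s))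
    {V : Finset (ℕ × ℕ)} (hV : V ⊆ Finset.Ico α (2 * α) ×ˢ Finset.Ico β (2 * β))
    (hVn : V.Nontrivial) : ∃ p ∈ V, ∃ p' ∈ V, ∃ δ : ℝ, 0 < δ ∧
      (∀ t t' : ℝ, 1 / 3 ≤ t → t ≤ 1 / 2 → 1 / 3 ≤ t' → t' ≤ 1 / 2 →
        δ ≤ |cfPhi (spBlock m p).1 t - cfPhi (spBlock m p').1 t'|) ∧
      g * (V.card * (1 / ((α : ℝ) * β))) ≤ 30000 * δ ^ s := by
  have hα0 : (1 : ℝ) ≤ α := hX.trans hα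
  have hβ0 : (1 : ℝ) ≤ β := hY.trans hβ
  have hVb : ∀ p ∈ V, (α ≤ p.1 ∧ p.1 < 2 * α) ∧ (β ≤ p.2 ∧ p.2 < 2 * β) := by
    intro p hp
    simpa [Finset.mem_product, Finset.mem_Ico] using hV hp
  have hne : V.Nonempty := hVn.nonempty
  have hne1 : (V.image Prod.fst).Nonempty := hne.image _
  set a1 := (V.image Prod.fst).min' hne1 with ha1
  set a2 := (V.image Prod.fst).max' hne1 with ha2
  obtain ⟨p1, hp1, hp1'⟩ := Finset.mem_image.1 ((V.image Prod.fst).min'_mem hne1)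
  obtain ⟨p2, hp2, hp2'⟩ := Finset.mem_image.1 ((V.image Prod.fst).max'_mem hne1)
  rw [← ha1] at hp1'
  rw [← ha2] at hp2'
  have hmem1 : ∀ p ∈ V, a1 ≤ p.1 ∧ p.1 ≤ a2 := fun p hp =>
    ⟨Finset.min'_le _ _ (Finset.mem_image_of_mem _ hp),
      Finset.le_max' _ _ (Finset.mem_image_of_mem _ hp)⟩
  have b1 := (hVb p1 hp1).1
  have b2 := (hVb p2 hp2).1
  have ha12 : a1 ≤ a2 := (hmem1 p1 hp1).1.trans (hmem1 p1 hp1).2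
  rcases ha12.lt_or_eq with hlt | heq
  · -- the second letters range over at most `β` values
    have hcard : V.card ≤ (a2 + 1 - a1) * β := by
      have hsub : V ⊆ Finset.Icc a1 a2 ×ˢ Finset.Ico β (2 * β) := fun p hp => by
        rw [Finset.mem_product, Finset.mem_Icc, Finset.mem_Ico]
        exact ⟨hmem1 p hp, (hVb p hp).2⟩
      have := Finset.card_le_card hsub
      rw [Finset.card_product, Nat.card_Icc, Nat.card_Ico] at this
      rwa [show 2 * β - β = β by omega] at this
    have hcard' : (V.card : ℝ) ≤ 2 * ((a2 : ℝ) - a1) * β := by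
      have h1 : (V.card : ℝ) ≤ ((a2 + 1 - a1 : ℕ) : ℝ) * β := by exact_mod_cast hcard
      rw [Nat.cast_sub (by omega)] at h1
      push_cast at h1
      have h2 : (a1 : ℝ) + 1 ≤ a2 := by exact_mod_cast hlt
      refine h1.trans ?_
      gcongr
      linarith
    have hd0 : (0 : ℝ) < (a2 : ℝ) - a1 := by
      rw [sub_pos]; exact_mod_cast hlt
    refine ⟨p1, hp1, p2, hp2, ((a2 : ℝ) - a1) / (324 * (α : ℝ) ^ 2), by positivity, ?_, ?_⟩
    · intro t t' h1 h2 h3 h4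
      have := spBlock_sep_fst (m := m) (a := a1) (a' := a2) (b := p1.2) (b' := p2.2) (α := (α : ℝ))
        hα0 hlt (by exact_mod_cast (by omega : a2 + 1 ≤ 2 * α)) h1 h2 h3 h4
      rwa [← hp1', ← hp2'] at this ⊢
    · refine le_trans ?_ (special_num_fst hs0 hs1 hX hα hα2 hg1 hd0 ?_)
      · refine mul_le_mul_of_nonneg_left ?_ hg0
        rw [mul_one_div, div_le_iff₀ (by positivity)]
        refine hcard'.trans (le_of_eq ?_)
        field_simp
      · have : (a2 : ℝ) ≤ α + a1 := by exact_mod_cast (by omega : a2 ≤ α + a1)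
        linarith
  · -- all first letters agree
    have hfst : ∀ p ∈ V, p.1 = a1 := fun p hp => by have := hmem1 p hp; omega
    have hne2 : (V.image Prod.snd).Nonempty := hne.image _
    set c1 := (V.image Prod.snd).min' hne2 with hc1
    set c2 := (V.image Prod.snd).max' hne2 with hc2
    obtain ⟨r1, hr1, hr1'⟩ := Finset.mem_image.1 ((V.image Prod.snd).min'_mem hne2)
    obtain ⟨r2, hr2, hr2'⟩ := Finset.mem_image.1 ((V.image Prod.snd).max'_mem hne2)
    rw [← hc1] at hr1'
    rw [← hc2] at hr2'
    have hmem2 : ∀ p ∈ V, c1 ≤ p.2 ∧ p.2 ≤ c2 := fun p hp =>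
      ⟨Finset.min'_le _ _ (Finset.mem_image_of_mem _ hp),
        Finset.le_max' _ _ (Finset.mem_image_of_mem _ hp)⟩
    have d1 := (hVb r1 hr1).2
    have d2 := (hVb r2 hr2).2
    have hlt : c1 < c2 := by
      obtain ⟨x, hx, y, hy, hxy⟩ := hVn
      by_contra hcon
      have hx1 := hmem2 x hx
      have hy1 := hmem2 y hy
      exact hxy (Prod.ext ((hfst x hx).trans (hfst y hy).symm) (by omega))
    have hcard : V.card ≤ c2 + 1 - c1 := by
      have hsub : V ⊆ {a1} ×ˢ Finset.Icc c1 c2 := fun p hp => by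
        rw [Finset.mem_product, Finset.mem_Icc, Finset.mem_singleton]
        exact ⟨hfst p hp, hmem2 p hp⟩
      have := Finset.card_le_card hsub
      rwa [Finset.card_product, Nat.card_Icc, Finset.card_singleton, one_mul] at this
    have hcard' : (V.card : ℝ) ≤ 2 * ((c2 : ℝ) - c1) := by
      have h1 : (V.card : ℝ) ≤ ((c2 + 1 - c1 : ℕ) : ℝ) := by exact_mod_cast hcard
      rw [Nat.cast_sub (by omega)] at h1
      push_cast at h1
      have h2 : (c1 : ℝ) + 1 ≤ c2 := by exact_mod_cast hlt
      linarith
    have hd0 : (0 : ℝ) < (c2 : ℝ) - c1 := by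
      rw [sub_pos]; exact_mod_cast hlt
    refine ⟨r1, hr1, r2, hr2, ((c2 : ℝ) - c1) / (2916 * ((α : ℝ) ^ 2 * (β : ℝ) ^ 2)),
      by positivity, ?_, ?_⟩
    · intro t t' h1 h2 h3 h4
      have := spBlock_sep_snd (m := m) (a := a1) (b := c1) (b' := c2) (α := (α : ℝ)) (β := (β : ℝ))
        hα0 hβ0 hlt (by exact_mod_cast (by omega : a1 + 1 ≤ 2 * α))
        (by exact_mod_cast (by omega : c2 + 1 ≤ 2 * β)) h1 h2 h3 h4
      have e1 : r1 = (a1, c1) := Prod.ext (hfst r1 hr1) hr1'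
      have e2 : r2 = (a1, c2) := Prod.ext (hfst r2 hr2) hr2'
      rwa [e1, e2]
    · refine le_trans ?_ (special_num_snd hs0 hs1 hX hY hα hα2 hβ hβ2 hg2 hd0 ?_)
      · refine mul_le_mul_of_nonneg_left ?_ hg0
        rw [mul_one_div, ← mul_div_assoc]
        gcongr
      · have : (c2 : ℝ) ≤ β + c1 := by exact_mod_cast (by omega : c2 ≤ β + c1)
        linarith

/-! ### Growth of denominators along blocks -/

/-- The block `2, 2, 2, w`. -/
def regBlock {m : ℕ} (w : Fin m → ℕ+) : Block :=
  ⟨2 :: 2 :: 2 :: tupleWord w, by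
    refine ⟨?_, _, rfl⟩
    intro a ha
    simp only [List.mem_cons] at ha
    rcases ha with rfl | rfl | rfl | ha
    · norm_num
    · norm_num
    · norm_num
    · exact tupleWord_pos w a ha⟩

lemma regBlock_injective (m : ℕ) : Function.Injective (regBlock (m := m)) := by
  intro w w' h
  have := congrArg Subtype.val h
  simp only [regBlock, List.cons.injEq, true_and] at this
  exact tupleWord_injective this

/-- Appending the regular block of `w` multiplies `q ^ (2s)` by at most a constant times
`q(w) ^ (2s)`. -/
lemma reg_step {u : List ℕ} (hu : PosWord u) {m : ℕ} (w : Fin m → ℕ+) {s : ℝ} (hs0 : 0 < s)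
    (hs1 : s < 1) :
    (contQ (tupleWord w) : ℝ) ^ (-2 * s) * (contQ (u ++ (regBlock w).1) : ℝ) ^ (2 * s) ≤
      2304 * (contQ u : ℝ) ^ (2 * s) := by
  have hw := tupleWord_pos w
  have h3 : PosWord [2, 2, 2] := by intro a ha; simp at ha; omega
  have h1 := contQ_append_le hu (regBlock w).2.1
  have h2 : contQ (regBlock w).1 ≤ 2 * (12 * contQ (tupleWord w)) := contQ_append_le h3 hw
  have h4 : contQ (u ++ (regBlock w).1) ≤ 48 * (contQ u * contQ (tupleWord w)) := by
    calc _ ≤ 2 * (contQ u * contQ (regBlock w).1) := h1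
      _ ≤ 2 * (contQ u * (2 * (12 * contQ (tupleWord w)))) := by gcongr
      _ = _ := by ring
  have h5 : (contQ (u ++ (regBlock w).1) : ℝ) ≤ 48 * (contQ u * contQ (tupleWord w)) := by
    exact_mod_cast h4
  have hq := contQ_pos hw
  have hq' := contQ_pos hu
  have h6 : (contQ (u ++ (regBlock w).1) : ℝ) ^ (2 * s) ≤
      2304 * ((contQ u : ℝ) ^ (2 * s) * (contQ (tupleWord w) : ℝ) ^ (2 * s)) := by
    refine (Real.rpow_le_rpow (Nat.cast_nonneg _) h5 (by linarith)).trans ?_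
    rw [Real.mul_rpow (by norm_num) (by positivity), Real.mul_rpow hq'.le hq.le]
    gcongr
    calc (48 : ℝ) ^ (2 * s) ≤ 48 ^ (2 : ℝ) :=
          Real.rpow_le_rpow_of_exponent_le (by norm_num) (by linarith)
      _ = 2304 := by norm_num
  have h7 : (contQ (tupleWord w) : ℝ) ^ (-2 * s) * (contQ (tupleWord w) : ℝ) ^ (2 * s) = 1 := by
    rw [← Real.rpow_add hq]; simp
  calc _ ≤ (contQ (tupleWord w) : ℝ) ^ (-2 * s) *
        (2304 * ((contQ u : ℝ) ^ (2 * s) * (contQ (tupleWord w) : ℝ) ^ (2 * s))) := by gcongr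
    _ = 2304 * (contQ u : ℝ) ^ (2 * s) *
        ((contQ (tupleWord w) : ℝ) ^ (-2 * s) * (contQ (tupleWord w) : ℝ) ^ (2 * s)) := by ring
    _ = _ := by rw [h7, mul_one]

/-- Appending a special block, of probability `1 / (α β)`, multiplies mass times `q ^ (2s)` by at most
a constant (depending on `m`) times `P ^ (2s-1)`, where `P` is comparable to `α β`. -/
lemma sp_step {u : List ℕ} (hu : PosWord u) {m a b α β : ℕ} (ha : a < 2 * α) (hb : b < 2 * β)
    {s P : ℝ} (hs0 : 0 < s) (hs1 : s < 1) (hP : 0 < P) (h1 : P ≤ (α : ℝ) * β)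
    (h2 : (α : ℝ) * β ≤ 4 * P) :
    1 / ((α : ℝ) * β) * (contQ (u ++ (spBlock m (a, b)).1) : ℝ) ^ (2 * s) ≤
      (4 * (128 * (contQ (List.replicate m 2) : ℝ)) ^ (2 * s)) * P ^ (2 * s - 1) *
        (contQ u : ℝ) ^ (2 * s) := by
  set Q := contQ (List.replicate m 2) with hQ
  have hrep : PosWord (List.replicate m 2) := by
    intro a ha
    rw [List.mem_replicate] at ha
    omega
  have hsing : ∀ x : ℕ, 1 ≤ x → PosWord [x] := fun x hx a ha => by simp at ha; omega
  have hqs : ∀ x : ℕ, contQ [x] = x := fun x => by simp [contQ]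
  have k1 : contQ ([b + 1] ++ List.replicate m 2) ≤ 2 * ((b + 1) * Q) := by
    have := contQ_append_le (hsing (b + 1) (by omega)) hrep
    rwa [hqs] at this
  have p1 := (hsing (b + 1) (by omega)).append hrep
  have k2 : contQ ([a + 1] ++ ([b + 1] ++ List.replicate m 2)) ≤
      2 * ((a + 1) * (2 * ((b + 1) * Q))) := by
    have := contQ_append_le (hsing (a + 1) (by omega)) p1
    rw [hqs] at this
    refine this.trans ?_
    gcongr
  have p2 := (hsing (a + 1) (by omega)).append p1
  have k3 : contQ (spBlock m (a, b)).1 ≤ 2 * (2 * (2 * ((a + 1) * (2 * ((b + 1) * Q))))) := by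
    have := contQ_append_le (hsing 2 (by omega)) p2
    rw [hqs] at this
    refine le_trans this ?_
    gcongr
  have k4 : contQ (u ++ (spBlock m (a, b)).1) ≤ 128 * Q * (α * β) * contQ u := by
    calc _ ≤ 2 * (contQ u * contQ (spBlock m (a, b)).1) := contQ_append_le hu (spBlock m (a, b)).2.1
      _ ≤ 2 * (contQ u * (2 * (2 * (2 * ((2 * α) * (2 * ((2 * β) * Q))))))) := by
          refine Nat.mul_le_mul_left _ (Nat.mul_le_mul_left _ (k3.trans ?_))
          gcongr <;> omega
      _ = _ := by ring
  have k5 : (contQ (u ++ (spBlock m (a, b)).1) : ℝ) ≤ 128 * Q * ((α : ℝ) * β) * contQ u := by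
    exact_mod_cast k4
  have hR : 0 < (α : ℝ) * β := hP.trans_le h1
  have hQ0 : (0 : ℝ) < Q := contQ_pos hrep
  have hq' := contQ_pos hu
  have k6 := (rpow_le_mul_of_ratio (e := 2 * s - 1) (K := 4) (by linarith) (by linarith) hP h1 h2).1
  have k7 : ((α : ℝ) * β) ^ (2 * s - 1) = ((α : ℝ) * β) ^ (2 * s) / ((α : ℝ) * β) :=
    Real.rpow_sub_one hR.ne' _
  calc _ ≤ 1 / ((α : ℝ) * β) * (128 * Q * ((α : ℝ) * β) * contQ u) ^ (2 * s) := by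
        gcongr
    _ = (128 * (Q : ℝ)) ^ (2 * s) * ((α : ℝ) * β) ^ (2 * s - 1) * (contQ u : ℝ) ^ (2 * s) := by
        rw [Real.mul_rpow (by positivity) hq'.le, Real.mul_rpow (by positivity) hR.le, k7]
        field_simp
    _ ≤ (128 * (Q : ℝ)) ^ (2 * s) * (4 * P ^ (2 * s - 1)) * (contQ u : ℝ) ^ (2 * s) := by gcongr
    _ = _ := by ring

/-! ### The lower bound -/

/-- Blocks have length `M`, so special places have to be chosen in one residue class modulo `M`. -/
lemma exists_residue {T : Set ℕ} (hT : T.Infinite) {M : ℕ} (hM : 0 < M) :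
    ∃ ρ, {j | ρ + M * j + 2 ∈ T}.Infinite := by
  by_contra hcon
  push Not at hcon
  refine hT ?_
  have hfin : (⋃ ρ ∈ Set.Iio M, (fun j => ρ + M * j + 2) '' {j | ρ + M * j + 2 ∈ T}).Finite :=
    (Set.finite_Iio M).biUnion fun ρ _ => (hcon ρ).image _
  refine (hfin.union (Set.finite_Iio 2)).subset fun n hn => ?_
  by_cases h2 : n < 2
  · exact Or.inr h2
  · left
    have h3 := Nat.mod_add_div (n - 2) M
    have h4 : (n - 2) % M + M * ((n - 2) / M) + 2 = n := by omega
    refine Set.mem_biUnion (Nat.mod_lt (n - 2) hM : (n - 2) % M ∈ Set.Iio M)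
      ⟨(n - 2) / M, ?_, h4⟩
    simpa only [Set.mem_ofPred_eq, h4] using hn

lemma eventually_bound_lt_pow {A c K : ℝ} (hc : 1 ≤ c) (hcA : c < A) :
    ∀ᶠ N : ℕ in atTop, K + 4 * c ^ (N + 1) < A ^ N := by
  have hA : 0 < A := by linarith
  have h1 : Tendsto (fun N : ℕ => K * (1 / A) ^ N + 4 * c * (c / A) ^ N) atTop (𝓝 0) := by
    have e1 := (tendsto_pow_atTop_nhds_zero_of_lt_one (r := 1 / A) (by positivity)
      ((div_lt_one hA).2 (by linarith))).const_mul K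
    have e2 := (tendsto_pow_atTop_nhds_zero_of_lt_one (r := c / A) (by positivity)
      ((div_lt_one hA).2 hcA)).const_mul (4 * c)
    simpa using e1.add e2
  filter_upwards [h1.eventually_lt_const one_pos] with N hN
  have hAN : 0 < A ^ N := by positivity
  rw [div_pow, div_pow, one_pow] at hN
  have := mul_lt_mul_of_pos_right hN hAN
  rw [one_mul] at this
  refine lt_of_eq_of_lt ?_ this
  field_simp
  ring

lemma length_preWord {u : List ℕ} {ω : ℕ → Block} {M : ℕ} (h : ∀ j, (ω j).1.length = M) (j : ℕ) :
    (preWord u ω j).length = u.length + M * j := by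
  induction j with
  | zero => simp [preWord]
  | succ j ih => rw [preWord, List.length_append, ih, h]; ring

/-- All the data of the construction being chosen, the coded points lie in `F(Φ)`: the special
blocks produce the products `≥ Φ n`, and every partial quotient is too small to exceed `Φ`. -/
lemma codePt_mem_Fset {Φ : ℕ → ℝ} {C A s K : ℝ} {m ρ : ℕ} {S : Set ℕ} {ω : ℕ → Block}
    {α β : ℕ → ℕ} (hs0 : 0 < s) (hs1 : s < 1) (hC : 1 < C) (hA : C ^ max s (1 - s) < A)
    (hΦA : ∀ᶠ n : ℕ in atTop, A ^ n ≤ Φ n) (hS : S.Infinite)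
    (hSΦ : ∀ j ∈ S, Φ (ρ + (m + 3) * j + 2) ≤ C ^ (ρ + (m + 3) * j + 2))
    (hK : 2 ≤ K)
    (hα : ∀ j, C ^ (s * (ρ + (m + 3) * j + 2 : ℕ)) ≤ α j)
    (hα2 : ∀ j, (α j : ℝ) ≤ 2 * C ^ (s * (ρ + (m + 3) * j + 2 : ℕ)))
    (hβ : ∀ j, C ^ ((1 - s) * (ρ + (m + 3) * j + 2 : ℕ)) ≤ β j)
    (hβ2 : ∀ j, (β j : ℝ) ≤ 2 * C ^ ((1 - s) * (ρ + (m + 3) * j + 2 : ℕ)))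
    (hspec : ∀ j ∈ S, ∃ p : ℕ × ℕ, ω j = spBlock m p ∧ (α j ≤ p.1 ∧ p.1 < 2 * α j) ∧
      (β j ≤ p.2 ∧ p.2 < 2 * β j))
    (hreg : ∀ j, j ∉ S → (ω j).1.length = m + 3 ∧ ∀ a ∈ (ω j).1, (a : ℝ) ≤ K) :
    codePt (List.replicate ρ 2) ω ∈ Fset Φ := by
  have hu : PosWord (List.replicate ρ 2) := by
    intro a ha
    rw [List.mem_replicate] at ha
    omega
  have hC0 : 0 < C := by linarith
  have hlen : ∀ j, (ω j).1.length = m + 3 := by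
    intro j
    by_cases hj : j ∈ S
    · obtain ⟨p, hp, -⟩ := hspec j hj
      rw [hp]
      simp [spBlock]
    · exact (hreg j hj).1
  have hpl : ∀ j, (preWord (List.replicate ρ 2) ω j).length = ρ + (m + 3) * j := by
    intro j
    rw [length_preWord hlen, List.length_replicate]
  set σ := max s (1 - s) with hσ
  have hσ0 : 0 < σ := lt_max_of_lt_left hs0
  have hx := codePt_pos_lt_one hu ω
  refine ⟨⟨hx.1.le, hx.2⟩, codePt_irrational hu ω, ?_, ?_⟩
  · rw [frequently_atTop]
    intro N
    obtain ⟨j, hj, hjN⟩ := hS.exists_gt N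
    obtain ⟨p, hp, ⟨h1, -⟩, ⟨h2, -⟩⟩ := hspec j hj
    refine ⟨ρ + (m + 3) * j + 2, by nlinarith, ?_⟩
    have e1 := cfA_codePt hu ω j (w := [2]) (a := p.1 + 1) (v := (p.2 + 1) :: List.replicate m 2)
      (by rw [hp]; rfl)
    have e2 := cfA_codePt hu ω j (w := [2, p.1 + 1]) (a := p.2 + 1) (v := List.replicate m 2)
      (by rw [hp]; rfl)
    rw [hpl] at e1 e2
    simp only [List.length_cons, List.length_nil, zero_add] at e1 e2
    rw [show ρ + (m + 3) * j + 2 + 1 = ρ + (m + 3) * j + (1 + 1) + 1 by ring, e2,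
      show ρ + (m + 3) * j + 2 = ρ + (m + 3) * j + 1 + 1 by ring, e1]
    refine (hSΦ j hj).trans ?_
    have h3 : (α j : ℝ) ≤ ((p.1 + 1 : ℕ) : ℝ) := by exact_mod_cast (by omega : α j ≤ p.1 + 1)
    have h4 : (β j : ℝ) ≤ ((p.2 + 1 : ℕ) : ℝ) := by exact_mod_cast (by omega : β j ≤ p.2 + 1)
    have h5 : C ^ (ρ + (m + 3) * j + 2) = C ^ ((1 - s) * (ρ + (m + 3) * j + 2 : ℕ)) *
        C ^ (s * (ρ + (m + 3) * j + 2 : ℕ)) := by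
      rw [← Real.rpow_add hC0, ← Real.rpow_natCast]
      congr 1; ring
    rw [h5]
    exact mul_le_mul ((hβ j).trans h4) ((hα j).trans h3) (by positivity) (by positivity)
  · have hc1 : 1 ≤ C ^ σ := Real.one_le_rpow hC.le hσ0.le
    filter_upwards [hΦA, eventually_bound_lt_pow (K := K) hc1 hA, eventually_ge_atTop ρ]
      with N hN1 hN2 hN3
    refine lt_of_le_of_lt ?_ (hN2.trans_le hN1)
    set j := (N - ρ) / (m + 3) with hj
    set r := (N - ρ) % (m + 3) with hr
    have hrlt : r < m + 3 := Nat.mod_lt _ (by omega)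
    have hN : N = ρ + (m + 3) * j + r := by
      have := Nat.div_add_mod (N - ρ) (m + 3)
      rw [← hj, ← hr] at this
      omega
    have hrl : r < (ω j).1.length := by rw [hlen]; exact hrlt
    have hdec : (ω j).1 = (ω j).1.take r ++ (ω j).1[r] :: (ω j).1.drop (r + 1) := by
      rw [List.getElem_cons_drop, List.take_append_drop]
    have e := cfA_codePt hu ω j hdec
    rw [hpl, List.length_take, min_eq_left hrl.le, ← hN] at e
    rw [e]
    have hpow : ∀ n : ℕ, n ≤ N + 1 → ∀ τ : ℝ, 0 < τ → τ ≤ σ → C ^ (τ * n) ≤ (C ^ σ) ^ (N + 1) := by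
      intro n hn τ hτ0 hτ
      rw [← Real.rpow_natCast, ← Real.rpow_mul hC0.le]
      apply Real.rpow_le_rpow_of_exponent_le hC.le
      have : (n : ℝ) ≤ ((N + 1 : ℕ) : ℝ) := by exact_mod_cast hn
      gcongr
    have hnn : 0 ≤ (C ^ σ) ^ (N + 1) := by positivity
    by_cases hjS : j ∈ S
    · obtain ⟨p, hp, ⟨-, h1⟩, ⟨-, h2⟩⟩ := hspec j hjS
      have hp' : (ω j).1 = 2 :: (p.1 + 1) :: (p.2 + 1) :: List.replicate m 2 := by rw [hp]; rfl
      have hcases : ((ω j).1[r] = 2) ∨ (r = 1 ∧ (ω j).1[r] = p.1 + 1) ∨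
          (r = 2 ∧ (ω j).1[r] = p.2 + 1) := by
        simp only [hp']
        clear_value r
        match r, hrlt with
        | 0, _ => left; rfl
        | 1, _ => right; left; exact ⟨rfl, rfl⟩
        | 2, _ => right; right; exact ⟨rfl, rfl⟩
        | r + 3, _ => left; simp
      rcases hcases with h | ⟨hr1, h⟩ | ⟨hr2, h⟩
      · rw [h]
        push_cast
        linarith
      · rw [h]
        have h3 : ((p.1 + 1 : ℕ) : ℝ) ≤ 2 * α j := by exact_mod_cast (by omega : p.1 + 1 ≤ 2 * α j)
        have h4 := hpow (ρ + (m + 3) * j + 2) (by omega) s hs0 (le_max_left _ _)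
        linarith [hα2 j]
      · rw [h]
        have h3 : ((p.2 + 1 : ℕ) : ℝ) ≤ 2 * β j := by exact_mod_cast (by omega : p.2 + 1 ≤ 2 * β j)
        have h4 := hpow (ρ + (m + 3) * j + 2) (by omega) (1 - s) (by linarith) (le_max_right _ _)
        linarith [hβ2 j]
    · have := (hreg j hjS).2 _ (List.getElem_mem hrl)
      linarith

set_option maxHeartbeats 2000000 in
/-- The lower bound at a fixed `s ∈ (0, 1)`. A finite set `W₀` of words of length `m` with a large
partition sum provides the regular blocks; along a sparse set of steps where `Φ n ≤ C ^ n`, a block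
with two consecutive letters of sizes `C ^ (s n)` and `C ^ ((1 - s) n)` is used instead. The bound
`g j` on (mass of a prefix) · (continuant)^(2s) shrinks by `C ^ (-s² (m + 3)) / 2` at each regular
step, which by sparsity outweighs the growth at the special steps. -/
theorem le_dimH_Fset_of_data {Φ : ℕ → ℝ} {C A s : ℝ} (hs0 : 0 < s) (hs1 : s < 1) (hC : 1 < C)
    (hA : C ^ max s (1 - s) < A) (hΦA : ∀ᶠ n : ℕ in atTop, A ^ n ≤ Φ n)
    (hΦC : ∃ᶠ n : ℕ in atTop, Φ n ≤ C ^ n) {m : ℕ} (W₀ : Finset (Fin m → ℕ+))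
    (hZ : 4608 * C ^ (s ^ 2 * (m + 3 : ℕ)) ≤
      ∑ w ∈ W₀, (contQ (tupleWord w) : ℝ) ^ (-2 * s)) :
    ENNReal.ofReal s ≤ dimH (Fset Φ) := by
  classical
  have hC0 : 0 < C := by linarith
  obtain ⟨ρ, hG⟩ := exists_residue (Nat.frequently_atTop_iff_infinite.1 hΦC)
    (by omega : 0 < m + 3)
  set M := m + 3 with hM
  set n : ℕ → ℕ := fun j => ρ + M * j + 2 with hn
  set u := List.replicate ρ 2 with hu'
  have hu : PosWord u := by
    intro a ha
    rw [hu', List.mem_replicate] at ha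
    omega
  set Z := ∑ w ∈ W₀, (contQ (tupleWord w) : ℝ) ^ (-2 * s) with hZdef
  have hZ0 : 0 < Z := lt_of_lt_of_le (by positivity) hZ
  set κ' : ℝ := 4 * (128 * (contQ (List.replicate m 2) : ℝ)) ^ (2 * s) with hκ'
  have hκ'0 : 0 ≤ κ' := by positivity
  set g₀ : ℝ := (contQ u : ℝ) ^ (2 * s) with hg₀
  have hg₀0 : 0 ≤ g₀ := by positivity
  set H : ℕ → ℝ := fun j => κ' * C ^ ((2 * s - 1) * n j) * C ^ (s ^ 2 * M) with hH
  obtain ⟨S, hSG, hSinf, hS0, hS⟩ := exists_sparse hG H (g₀ * C ^ (s ^ 2 * n 0))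
  -- the multiplicative change of the mass bound at step `j`
  set fac : ℕ → ℝ := fun j =>
    if j ∈ S then κ' * C ^ ((2 * s - 1) * n j) else C ^ (-(s ^ 2 * M)) / 2 with hfac
  have hfac0 : ∀ j, 0 ≤ fac j := by
    intro j
    simp only [hfac]
    split_ifs <;> positivity
  set g : ℕ → ℝ := fun j => g₀ * ∏ i ∈ Finset.range j, fac i with hg
  have hg0 : ∀ j, 0 ≤ g j := fun j => mul_nonneg hg₀0 (Finset.prod_nonneg fun i _ => hfac0 i)
  have hgsucc : ∀ j, g (j + 1) = g j * fac j := by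
    intro j
    simp only [hg]
    rw [Finset.prod_range_succ]; ring
  have hnsucc : ∀ j, (n (j + 1) : ℝ) = n j + M := by
    intro j
    simp only [hn]
    push_cast; ring
  have hgS : ∀ j ∈ S, g j ≤ C ^ (-(s ^ 2 * n j)) := by
    have hCM : C ^ (-(s ^ 2 * M)) * C ^ (s ^ 2 * M) = 1 := by
      rw [← Real.rpow_add hC0]; simp
    have := le_one_of_sparse (S := S) (H := H) (h := fun j => g j * C ^ (s ^ 2 * n j))
      (fun j => by simp only [hH]; positivity) (by simpa [hg] using hS0) hS ?_ ?_
    · intro j hj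
      have h1 := this j hj
      rw [Real.rpow_neg hC0.le, ← one_div, le_div_iff₀ (by positivity)]
      exact h1
    · intro j hj
      rw [hgsucc, hnsucc, mul_add, Real.rpow_add hC0]
      simp only [hfac, if_neg hj]
      linear_combination (g j * C ^ (s ^ 2 * (n j : ℝ)) / 2) * hCM
    · intro j hj
      rw [hgsucc, hnsucc, mul_add, Real.rpow_add hC0]
      simp only [hfac, if_pos hj, hH]
      ring
  set κ₁ := max g₀ κ' with hκ₁
  have hκ₁0 : 0 ≤ κ₁ := hg₀0.trans (le_max_left _ _)
  have hgκ : ∀ j, g j ≤ κ₁ := by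
    intro j
    induction j with
    | zero => simp [hg, hκ₁]
    | succ j ih =>
      rw [hgsucc]
      by_cases hj : j ∈ S
      · have h1 := hgS j hj
        simp only [hfac, if_pos hj]
        refine le_trans ?_ (le_max_right _ _)
        have h2 : C ^ (-(s ^ 2 * n j)) * C ^ ((2 * s - 1) * n j) ≤ 1 := by
          rw [← Real.rpow_add hC0]
          apply Real.rpow_le_one_of_one_le_of_nonpos hC.le
          have : (0 : ℝ) ≤ n j := Nat.cast_nonneg _
          nlinarith [mul_nonneg (sq_nonneg (1 - s)) this]
        calc g j * (κ' * C ^ ((2 * s - 1) * n j))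
            ≤ C ^ (-(s ^ 2 * n j)) * (κ' * C ^ ((2 * s - 1) * n j)) := by gcongr
          _ = κ' * (C ^ (-(s ^ 2 * n j)) * C ^ ((2 * s - 1) * n j)) := by ring
          _ ≤ κ' * 1 := by gcongr
          _ = κ' := mul_one _
      · simp only [hfac, if_neg hj]
        have h2 : C ^ (-(s ^ 2 * M)) ≤ 1 :=
          Real.rpow_le_one_of_one_le_of_nonpos hC.le (by rw [neg_nonpos]; positivity)
        have h3 := hg0 j
        have h4 : 0 ≤ C ^ (-(s ^ 2 * M)) := by positivity
        nlinarith
  -- the two letters of a special block are of sizes `X j` and `Y j`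
  set X : ℕ → ℝ := fun j => C ^ (s * n j) with hX
  set Y : ℕ → ℝ := fun j => C ^ ((1 - s) * n j) with hY
  have hX1 : ∀ j, 1 ≤ X j := fun j => Real.one_le_rpow hC.le (by positivity)
  have hY1 : ∀ j, 1 ≤ Y j := fun j =>
    Real.one_le_rpow hC.le (mul_nonneg (by linarith) (Nat.cast_nonneg _))
  set α : ℕ → ℕ := fun j => ⌈X j⌉₊ with hα
  set β : ℕ → ℕ := fun j => ⌈Y j⌉₊ with hβ
  have hα1 : ∀ j, X j ≤ α j := fun j => Nat.le_ceil _
  have hβ1 : ∀ j, Y j ≤ β j := fun j => Nat.le_ceil _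
  have hα2 : ∀ j, (α j : ℝ) ≤ 2 * X j := fun j => by
    have := Nat.ceil_lt_add_one (zero_le_one.trans (hX1 j))
    have h2 := hX1 j
    simp only [hα]; linarith
  have hβ2 : ∀ j, (β j : ℝ) ≤ 2 * Y j := fun j => by
    have := Nat.ceil_lt_add_one (zero_le_one.trans (hY1 j))
    have h2 := hY1 j
    simp only [hβ]; linarith
  have hαp : ∀ j, (0 : ℝ) < α j := fun j => by linarith [hX1 j, hα1 j]
  have hβp : ∀ j, (0 : ℝ) < β j := fun j => by linarith [hY1 j, hβ1 j]
  set box : ℕ → Finset (ℕ × ℕ) := fun j =>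
    Finset.Ico (α j) (2 * α j) ×ˢ Finset.Ico (β j) (2 * β j) with hbox
  have hboxcard : ∀ j, ((box j).card : ℝ) = α j * β j := by
    intro j
    simp only [hbox]
    rw [Finset.card_product, Nat.card_Ico, Nat.card_Ico, show 2 * α j - α j = α j by omega,
      show 2 * β j - β j = β j by omega]
    push_cast; rfl
  set Wreg : Finset Block := W₀.image regBlock with hWreg
  set W : ℕ → Finset Block := fun j => if j ∈ S then (box j).image (spBlock m) else Wreg with hW
  set c : ℕ → Block → ℝ := fun j w =>
    if j ∈ S then 1 / ((α j : ℝ) * β j) else (contQ (w.1.drop 3) : ℝ) ^ (-2 * s) / Z with hc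
  have hcreg : ∀ j, j ∉ S → ∀ w : Fin m → ℕ+,
      c j (regBlock w) = (contQ (tupleWord w) : ℝ) ^ (-2 * s) / Z := by
    intro j hj w
    simp only [hc, if_neg hj]
    rfl
  have hc0 : ∀ j w, 0 ≤ c j w := by
    intro j w
    simp only [hc]
    split_ifs <;> positivity
  have hsum : ∀ j, ∑ w ∈ W j, c j w = 1 := by
    intro j
    by_cases hj : j ∈ S
    · simp only [hW, hc, if_pos hj]
      rw [Finset.sum_const, Finset.card_image_of_injective _ (spBlock_injective m), nsmul_eq_mul,
        hboxcard, mul_one_div, div_self (mul_pos (hαp j) (hβp j)).ne']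
    · have hWj : W j = Wreg := by simp only [hW, if_neg hj]
      rw [hWj, hWreg, Finset.sum_image (fun _ _ _ _ h => regBlock_injective m h),
        Finset.sum_congr rfl fun w _ => hcreg j hj w, ← Finset.sum_div, div_self hZ0.ne']
  have hlenreg : ∀ w ∈ Wreg, w.1.length = M := by
    intro w hw
    obtain ⟨v, -, rfl⟩ := Finset.mem_image.1 hw
    simp [regBlock, hM, tupleWord_length]
  obtain ⟨δ₀, hδ₀, hsep⟩ := exists_sep Wreg hlenreg
  obtain ⟨κ, hκ⟩ : ∃ κ, κ = 30000 + κ₁ + κ₁ / δ₀ ^ s := ⟨_, rfl⟩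
  have hκ3 : 0 ≤ κ₁ / δ₀ ^ s := by positivity
  obtain ⟨K, hK⟩ : ∃ K : ℝ, K = 2 + ∑ w ∈ Wreg, (w.1.sum : ℝ) := ⟨_, rfl⟩
  refine le_dimH_of_blocks hu (κ := κ) hs0 W c g (fun j w _ => hc0 j w) hsum
    (fun j => (hgκ j).trans (by rw [hκ]; linarith)) ?_ ?_ ?_
  · intro ω hω j
    induction j with
    | zero => simp [hg, hg₀, preWord]
    | succ j ih =>
      rw [Finset.prod_range_succ, hgsucc]
      have hstep : c j (ω j) * (contQ (preWord u ω (j + 1)) : ℝ) ^ (2 * s) ≤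
          fac j * (contQ (preWord u ω j) : ℝ) ^ (2 * s) := by
        have hp := preWord_pos hu ω j
        have hωj := hω j
        by_cases hj : j ∈ S
        · simp only [hW, if_pos hj] at hωj
          obtain ⟨⟨a, b⟩, hab, he⟩ := Finset.mem_image.1 hωj
          simp only [hbox, Finset.mem_product, Finset.mem_Ico] at hab
          simp only [hc, hfac, if_pos hj, preWord]
          rw [← he]
          have hXY : X j * Y j = C ^ (n j : ℝ) := by
            simp only [hX, hY]
            rw [← Real.rpow_add hC0]
            congr 1; ring
          have hx1 := hX1 j
          have hy1 := hY1 j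
          have h1 : X j * Y j ≤ (α j : ℝ) * β j :=
            mul_le_mul (hα1 j) (hβ1 j) (by linarith) (hαp j).le
          have h2 : (α j : ℝ) * β j ≤ 4 * (X j * Y j) := by
            calc (α j : ℝ) * β j ≤ (2 * X j) * (2 * Y j) :=
                  mul_le_mul (hα2 j) (hβ2 j) (hβp j).le (by linarith)
              _ = _ := by ring
          have := sp_step hp (m := m) hab.1.2 hab.2.2 hs0 hs1 (by positivity) h1 h2
          rw [hXY, ← Real.rpow_mul hC0.le, mul_comm (n j : ℝ)] at this
          exact this
        · simp only [hW, if_neg hj] at hωj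
          obtain ⟨w, -, he⟩ := Finset.mem_image.1 hωj
          rw [preWord, ← he, hcreg j hj]
          simp only [hfac, if_neg hj]
          have h1 := reg_step hp w hs0 hs1
          rw [div_mul_eq_mul_div, div_le_iff₀ hZ0]
          refine h1.trans ?_
          have hq : 0 ≤ (contQ (preWord u ω j) : ℝ) ^ (2 * s) := by positivity
          have h2 : C ^ (-(s ^ 2 * M)) * C ^ (s ^ 2 * M) = 1 := by
            rw [← Real.rpow_add hC0]; simp
          have h3 : 2304 ≤ C ^ (-(s ^ 2 * M)) / 2 * Z := by
            calc (2304 : ℝ) = C ^ (-(s ^ 2 * M)) / 2 * (4608 * C ^ (s ^ 2 * M)) := by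
                  linear_combination (-2304) * h2
              _ ≤ _ := by gcongr
          nlinarith
      have hprod : 0 ≤ ∏ i ∈ Finset.range j, c i (ω i) := Finset.prod_nonneg fun i _ => hc0 _ _
      calc _ = (∏ i ∈ Finset.range j, c i (ω i)) *
            (c j (ω j) * (contQ (preWord u ω (j + 1)) : ℝ) ^ (2 * s)) := by ring
        _ ≤ (∏ i ∈ Finset.range j, c i (ω i)) *
            (fac j * (contQ (preWord u ω j) : ℝ) ^ (2 * s)) := by gcongr
        _ = ((∏ i ∈ Finset.range j, c i (ω i)) * (contQ (preWord u ω j) : ℝ) ^ (2 * s)) * fac j := by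
            ring
        _ ≤ _ := mul_le_mul_of_nonneg_right ih (hfac0 j)
  · intro j V hV hVn
    by_cases hj : j ∈ S
    · simp only [hW, if_pos hj] at hV
      obtain ⟨V', hV', rfl⟩ := Finset.subset_image_iff.1 hV
      have hVn' : V'.Nontrivial := by
        obtain ⟨x, hx, y, hy, hxy⟩ := hVn
        obtain ⟨x', hx', rfl⟩ := Finset.mem_image.1 (Finset.mem_coe.1 hx)
        obtain ⟨y', hy', rfl⟩ := Finset.mem_image.1 (Finset.mem_coe.1 hy)
        exact ⟨x', hx', y', hy', fun h => hxy (by rw [h])⟩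
      have e1 : X j ^ (-s) = C ^ (-(s ^ 2 * n j)) := by
        simp only [hX]
        rw [← Real.rpow_mul hC0.le]
        congr 1; ring
      have e2 : X j ^ (1 - 2 * s) * Y j ^ (-s) = C ^ (-(s ^ 2 * n j)) := by
        simp only [hX, hY]
        rw [← Real.rpow_mul hC0.le, ← Real.rpow_mul hC0.le, ← Real.rpow_add hC0]
        congr 1; ring
      obtain ⟨p, hp, p', hp', δ, hδ, h1, h2⟩ := spBlock_local (m := m) hs0 hs1 (hX1 j) (hY1 j)
        (hα1 j) (hα2 j) (hβ1 j) (hβ2 j) (hg0 j) ((hgS j hj).trans e1.ge) ((hgS j hj).trans e2.ge)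
        (by exact_mod_cast hV') hVn'
      refine ⟨_, Finset.mem_image_of_mem _ hp, _, Finset.mem_image_of_mem _ hp', δ, hδ, h1, ?_⟩
      simp only [hc, if_pos hj]
      rw [Finset.sum_const, Finset.card_image_of_injective _ (spBlock_injective m), nsmul_eq_mul]
      refine h2.trans ?_
      have : 30000 ≤ κ := by rw [hκ]; linarith
      gcongr
    · have hWj : W j = Wreg := by simp only [hW, if_neg hj]
      obtain ⟨w, hw, w', hw', hne⟩ := hVn
      rw [Finset.mem_coe] at hw hw'
      refine ⟨w, hw, w', hw', δ₀, hδ₀,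
        hsep w (hWj ▸ hV hw) w' (hWj ▸ hV hw') hne, ?_⟩
      have h1 : ∑ w ∈ V, c j w ≤ 1 := by
        rw [← hsum j]
        exact Finset.sum_le_sum_of_subset_of_nonneg hV fun w _ _ => hc0 j w
      have h2 : 0 ≤ ∑ w ∈ V, c j w := Finset.sum_nonneg fun w _ => hc0 j w
      calc g j * ∑ w ∈ V, c j w ≤ κ₁ * 1 := by
            have := hgκ j
            gcongr
        _ = κ₁ / δ₀ ^ s * δ₀ ^ s := by field_simp
        _ ≤ κ * δ₀ ^ s := by
            have : κ₁ / δ₀ ^ s ≤ κ := by rw [hκ]; linarith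
            gcongr
  · intro ω hω
    refine codePt_mem_Fset (K := K) (S := S) (α := α) (β := β) (m := m) hs0 hs1 hC hA hΦA hSinf
      (fun j hj => hSG hj) ?_ hα1 hα2 hβ1 hβ2 ?_ ?_
    · rw [hK]
      have : 0 ≤ ∑ w ∈ Wreg, (w.1.sum : ℝ) := Finset.sum_nonneg fun _ _ => Nat.cast_nonneg _
      linarith
    · intro j hj
      have hωj := hω j
      simp only [hW, if_pos hj] at hωj
      obtain ⟨p, hp, he⟩ := Finset.mem_image.1 hωj
      simp only [hbox, Finset.mem_product, Finset.mem_Ico] at hp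
      exact ⟨p, he.symm, hp⟩
    · intro j hj
      have hωj := hω j
      simp only [hW, if_neg hj] at hωj
      refine ⟨hlenreg _ hωj, fun a ha => ?_⟩
      have h1 : (a : ℝ) ≤ ((ω j).1.sum : ℝ) := by exact_mod_cast List.le_sum_of_mem ha
      have h2 : ((ω j).1.sum : ℝ) ≤ ∑ w ∈ Wreg, (w.1.sum : ℝ) :=
        Finset.single_le_sum (f := fun w : Block => (w.1.sum : ℝ))
          (fun _ _ => Nat.cast_nonneg _) hωj
      rw [hK]
      linarith

/-- Every `s < t_B` admits constants `C ^ max s (1 - s) < A < B < C` and a finite set of words to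
which `le_dimH_Fset_of_data` applies. -/
theorem le_dimH_Fset (Φ : ℕ → ℝ) (hΦ1 : ∀ n, 1 < Φ n) (B : ℝ) (hB : 1 < B)
    (hlogB : (Real.log B : EReal) =
      liminf (fun n : ℕ => ((Real.log (Φ n) / n : ℝ) : EReal)) atTop) :
    ENNReal.ofReal (presInf B (fun s => s ^ 2)) ≤ dimH (Fset Φ) := by
  have hB0 : 0 < B := by linarith
  refine le_of_forall_lt fun c hc => ?_
  -- pick a real `s` with `c < s < t_B`
  obtain ⟨r, hr1, hr2⟩ := ENNReal.lt_iff_exists_nnreal_btwn.1 hc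
  obtain hr3 := ENNReal.lt_ofReal_iff_toReal_lt (ENNReal.coe_ne_top) |>.1 hr2
  rw [ENNReal.coe_toReal] at hr3
  set s : ℝ := (r : ℝ) with hs
  have hs0 : 0 < s := by
    have : 0 < r := by
      have := ((zero_le : (0 : ℝ≥0∞) ≤ c).trans_lt hr1)
      exact_mod_cast this
    exact_mod_cast this
  have hs1 : s < 1 := hr3.trans_le (presInf_le_one hB)
  refine hr1.trans_le ?_
  rw [← ENNReal.ofReal_coe_nnreal]
  change ENNReal.ofReal s ≤ _
  set σ := max s (1 - s) with hσ
  have hσ0 : 0 < σ := lt_max_of_lt_left hs0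
  have hσ1 : σ < 1 := max_lt hs1 (by linarith)
  set D := B ^ (1 / σ) with hD
  have hBD : B < D := by
    conv_lhs => rw [← Real.rpow_one B]
    exact Real.rpow_lt_rpow_of_exponent_lt hB (by rw [lt_div_iff₀ hσ0]; linarith)
  obtain ⟨C, hBC, hCD, hpart⟩ := partSum_lower hB hs0.le hBD hr3
  have hC : 1 < C := hB.trans hBC
  have hCσ : C ^ σ < B := by
    have h1 := Real.rpow_lt_rpow (by linarith) hCD hσ0
    rwa [hD, ← Real.rpow_mul hB0.le, one_div_mul_cancel hσ0.ne', Real.rpow_one] at h1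
  obtain ⟨A, hA1, hA2⟩ := exists_between hCσ
  have hA : 1 < A := (Real.one_le_rpow hC.le hσ0.le).trans_lt hA1
  obtain ⟨m, hm⟩ := hpart (4608 * C ^ (s ^ 2 * 3))
  rw [partSum, ENNReal.tsum_eq_iSup_sum, lt_iSup_iff] at hm
  obtain ⟨W₀, hW₀⟩ := hm
  rw [← ENNReal.ofReal_sum_of_nonneg fun _ _ => by positivity] at hW₀
  have hW₁ := ENNReal.ofReal_lt_ofReal_iff'.1 hW₀ |>.1
  refine le_dimH_Fset_of_data hs0 hs1 hC hA1 (eventually_pow_le hΦ1 hA hA2 hlogB)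
    (frequently_le_pow hΦ1 hB hBC hlogB) W₀ (le_trans (le_of_eq ?_) hW₁.le)
  rw [mul_assoc, ← Real.rpow_add (by linarith)]
  congr 2
  push_cast
  ring

theorem dimH_Fset_of_one_lt_B (Φ : ℕ → ℝ) (hΦ1 : ∀ n, 1 < Φ n)
    (hΦ : Tendsto Φ atTop atTop) (B : ℝ) (hB : 1 < B)
    (hlogB : (Real.log B : EReal) =
      liminf (fun n : ℕ => ((Real.log (Φ n) / n : ℝ) : EReal)) atTop) :
    dimH (Fset Φ) = ENNReal.ofReal (presInf B (fun s => s ^ 2)) :=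
  le_antisymm (dimH_Fset_le Φ hΦ1 B hB hlogB) (le_dimH_Fset Φ hΦ1 B hB hlogB)
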